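/- (Corollary 3.5) Let n ≥ 2 and α ≥ 0. The norm order of the family F_α satisfies ‖ord‖F_α ≤ (n+1)·α + √(1 + (1/4)(n+1)α² + C(n,α)), where C(n,α) = (4n² + 2n − 2 + (n+1)/(n−1))·α² + (4√(n+1) + 8√(n+1)/(n−1))·α. -/

import Mathlib

open scoped BigOperators

noncomputable section

/-- Partial derivative `∂f/∂z_i` of a scalar-valued holomorphic function on `ℂⁿ`. -/
def pd (n : ℕ) (i : Fin n) (f : (Fin n → ℂ) → ℂ) (z : Fin n → ℂ) : ℂ :=
  fderiv ℂ f z (Pi.single i 1)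

/-- Second partial derivative `∂²f/∂z_i∂z_j`. -/
def pd2 (n : ℕ) (i j : Fin n) (f : (Fin n → ℂ) → ℂ) (z : Fin n → ℂ) : ℂ :=
  pd n i (fun w => pd n j f w) z

/-- Complex Jacobian matrix `DF`. -/
def Jac (n : ℕ) (F : (Fin n → ℂ) → (Fin n → ℂ)) (z : Fin n → ℂ) :
    Matrix (Fin n) (Fin n) ℂ :=
  Matrix.of fun i j => pd n j (fun w => F w i) z

/-- Jacobian determinant `JF = det DF`. -/
def JDet (n : ℕ) (F : (Fin n → ℂ) → (Fin n → ℂ)) (z : Fin n → ℂ) : ℂ :=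
  (Jac n F z).det

/-- Oda's Schwarzian derivative `S^k_{ij}F`; the derivative of `log JF` is expressed
by the logarithmic derivative `(∂JF/∂z)/JF`, which is the derivative of any local
branch of the logarithm. -/
def oSchw (n : ℕ) (F : (Fin n → ℂ) → (Fin n → ℂ)) (i j k : Fin n) (z : Fin n → ℂ) : ℂ :=
  (∑ l, pd2 n i j (fun w => F w l) z * (Jac n F z)⁻¹ k l)
    - (1 / ((n : ℂ) + 1)) *
        ((if k = i then 1 else 0) * (pd n j (JDet n F) z / JDet n F z)
          + (if k = j then 1 else 0) * (pd n i (JDet n F) z / JDet n F z))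

/-- `S⁰_{ij}F`, defined through a local branch `u₀` of `(JF)^{-1/(n+1)}`. -/
def oS0 (n : ℕ) (F : (Fin n → ℂ) → (Fin n → ℂ)) (u₀ : (Fin n → ℂ) → ℂ)
    (i j : Fin n) (z : Fin n → ℂ) : ℂ :=
  (u₀ z)⁻¹ * (pd2 n i j u₀ z - ∑ k, oSchw n F i j k z * pd n k u₀ z)

/-- Euclidean norm on `ℂⁿ`. -/
def euclNorm (n : ℕ) (v : Fin n → ℂ) : ℝ := Real.sqrt (∑ i, ‖v i‖ ^ 2)

/-- Euclidean open unit ball `Bⁿ ⊆ ℂⁿ`. -/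
def eball (n : ℕ) : Set (Fin n → ℂ) := {z | euclNorm n z < 1}

/-- A biholomorphic automorphism of the unit ball: a holomorphic bijection of `Bⁿ`
onto itself with holomorphic inverse. -/
def IsAutB (n : ℕ) (σ : (Fin n → ℂ) → (Fin n → ℂ)) : Prop :=
  DifferentiableOn ℂ σ (eball n) ∧ Set.BijOn σ (eball n) (eball n) ∧
    ∃ τ : (Fin n → ℂ) → (Fin n → ℂ), DifferentiableOn ℂ τ (eball n) ∧
      (∀ z ∈ eball n, τ (σ z) = z) ∧ (∀ w ∈ eball n, σ (τ w) = w)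

/-- The automorphism of `Bⁿ` with `σ(0) = (ζ₁,0,…,0)` used in Lemma 3.2. -/
def sigmaA (n : ℕ) [NeZero n] (ζ : ℂ) (z : Fin n → ℂ) : Fin n → ℂ := fun i =>
  if i = 0 then (z 0 + ζ) / (1 + (starRingEnd ℂ) ζ * z 0)
  else ((Real.sqrt (1 - ‖ζ‖ ^ 2) : ℂ) * z i) / (1 + (starRingEnd ℂ) ζ * z 0)

/-- The Koebe transform `G(z) = Dσ(0)⁻¹ DF₀(σ(0))⁻¹ (F₀(σ(z)) − F₀(σ(0)))`. -/
def Koebe (n : ℕ) (F₀ σ : (Fin n → ℂ) → (Fin n → ℂ)) (z : Fin n → ℂ) : Fin n → ℂ :=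
  Matrix.mulVec ((Jac n σ 0)⁻¹ * (Jac n F₀ (σ 0))⁻¹) (F₀ (σ z) - F₀ (σ 0))

/-- The conjugation `G(z) = U⁻¹·F₀(U·z)` of `F₀` by a unitary matrix `U`. -/
def unitKoebe (n : ℕ) (F₀ : (Fin n → ℂ) → (Fin n → ℂ)) (U : Matrix (Fin n) (Fin n) ℂ)
    (z : Fin n → ℂ) : Fin n → ℂ :=
  Matrix.mulVec U⁻¹ (F₀ (Matrix.mulVec U z))

/-- The Schwarzian derivative operator `SF(z)(v) = (vᵗ𝕊¹F(z)v, …, vᵗ𝕊ⁿF(z)v)`. -/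
def SchwOp (n : ℕ) (F : (Fin n → ℂ) → (Fin n → ℂ)) (z v : Fin n → ℂ) : Fin n → ℂ :=
  fun k => ∑ i, ∑ j, v i * oSchw n F i j k z * v j

/-- The squared Bergman norm `‖v‖_z² = Σ_{i,j} g_{ij}(z) v_i conj(v_j)` on `Bⁿ`. -/
def bergSq (n : ℕ) (z v : Fin n → ℂ) : ℝ :=
  (∑ i, ∑ j, (((n : ℂ) + 1) / (((1 - (euclNorm n z) ^ 2 : ℝ) : ℂ)) ^ 2) *
      ((if i = j then ((1 - (euclNorm n z) ^ 2 : ℝ) : ℂ) else 0)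
        + (starRingEnd ℂ) (z i) * z j) * v i * (starRingEnd ℂ) (v j)).re

/-- Membership in the linearly invariant family `F_α`. -/
def memF (n : ℕ) (α : ℝ) (F : (Fin n → ℂ) → (Fin n → ℂ)) : Prop :=
  DifferentiableOn ℂ F (eball n) ∧ (∀ z ∈ eball n, JDet n F z ≠ 0) ∧
    F 0 = 0 ∧ Jac n F 0 = 1 ∧
    ∀ z ∈ eball n, ∀ v : Fin n → ℂ, bergSq n z v = 1 →
      Real.sqrt (bergSq n z (SchwOp n F z v)) ≤ α

section Part1
open scoped BigOperators

open Metric Set in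
theorem holo_diff_clm {E G : Type*} [NormedAddCommGroup E] [NormedSpace ℂ E] [FiniteDimensional ℂ E]
    [NormedAddCommGroup G] [NormedSpace ℂ G] {D : Type*} [NormedAddCommGroup D] [NormedSpace ℂ D]
    {f : D → E →L[ℂ] G} {x : D}
    (h : ∀ v, DifferentiableAt ℂ (fun y => f y v) x) : DifferentiableAt ℂ f x := by
  let d := Module.finrank ℂ E
  have hd : d = Module.finrank ℂ (Fin d → ℂ) := (Module.finrank_fin_fun ℂ).symm
  let e₁ := ContinuousLinearEquiv.ofFinrankEq hd
  let e₂ := (e₁.arrowCongr (1 : G ≃L[ℂ] G)).trans (ContinuousLinearEquiv.piRing (Fin d))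
  rw [← Function.id_comp f, ← e₂.symm_comp_self]
  exact e₂.symm.differentiable.differentiableAt.comp x
    (differentiableAt_pi.mpr fun i => h _)

open Metric Set in
theorem holo_fderiv_bound {E G : Type*} [NormedAddCommGroup E] [NormedSpace ℂ E]
    [FiniteDimensional ℂ E] [NormedAddCommGroup G] [NormedSpace ℂ G]
    {f : E → G} {U : Set E} (hU : IsOpen U) (hf : DifferentiableOn ℂ f U)
    {y : E} {R C : ℝ} (hR : 0 < R) (hy : closedBall y R ⊆ U) (hC : ∀ x ∈ closedBall y R, ‖f x‖ ≤ C) :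
    ‖fderiv ℂ f y‖ ≤ C / R := by
  have hC0 : 0 ≤ C := (norm_nonneg _).trans (hC y (mem_closedBall_self hR.le))
  refine ContinuousLinearMap.opNorm_le_bound _ (by positivity) fun w => ?_
  by_cases hw : w = 0
  · simp [hw]
  have hw' : 0 < ‖w‖ := norm_pos_iff.2 hw
  have hmem : ∀ ζ ∈ closedBall (0:ℂ) (R / ‖w‖), y + ζ • w ∈ closedBall y R := by
    intro ζ hζ
    simp only [mem_closedBall, dist_zero_right, dist_self_add_left, norm_smul] at hζ ⊢
    rwa [le_div_iff₀ hw'] at hζ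
  have hdiff : ∀ ζ ∈ closedBall (0:ℂ) (R / ‖w‖), DifferentiableAt ℂ (fun ζ : ℂ => f (y + ζ • w)) ζ := by
    intro ζ hζ
    have h1 : DifferentiableAt ℂ f (y + ζ • w) :=
      (hf _ (hy (hmem ζ hζ))).differentiableAt (hU.mem_nhds (hy (hmem ζ hζ)))
    exact DifferentiableAt.comp (f := fun ζ : ℂ => y + ζ • w) ζ h1 (by fun_prop)
  have hder : deriv (fun ζ : ℂ => f (y + ζ • w)) 0 = fderiv ℂ f y w := by
    have h1 : HasFDerivAt f (fderiv ℂ f y) (y + (0:ℂ) • w) := by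
      have := ((hf _ (hy (mem_closedBall_self hR.le))).differentiableAt
        (hU.mem_nhds (hy (mem_closedBall_self hR.le)))).hasFDerivAt
      simpa using this
    have h2 : HasDerivAt (fun ζ : ℂ => y + ζ • w) w 0 := by
      simpa using ((hasDerivAt_id (0:ℂ)).smul_const w).const_add y
    exact (h1.comp_hasDerivAt (0:ℂ) h2).deriv
  have hρ : 0 < R / ‖w‖ := by positivity
  have := Complex.norm_deriv_le_of_forall_mem_sphere_norm_le (f := fun ζ : ℂ => f (y + ζ • w)) (c := 0) (C := C) hρ
    (DifferentiableOn.diffContOnCl (by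
      rw [closure_ball _ hρ.ne']
      exact fun ζ hζ => (hdiff ζ hζ).differentiableWithinAt))
    (fun ζ hζ => hC _ (hmem ζ (sphere_subset_closedBall hζ)))
  rw [hder] at this
  refine this.trans (le_of_eq ?_)
  field_simp

open Metric Set in
theorem holo_fderiv {E G : Type*} [NormedAddCommGroup E] [NormedSpace ℂ E]
    [FiniteDimensional ℂ E] [NormedAddCommGroup G] [NormedSpace ℂ G] [FiniteDimensional ℂ G]
    {f : E → G} {U : Set E} (hU : IsOpen U) (hf : DifferentiableOn ℂ f U) :
    DifferentiableOn ℂ (fderiv ℂ f) U := by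
  intro z₀ hz₀
  apply DifferentiableAt.differentiableWithinAt
  apply holo_diff_clm
  intro v
  have : ProperSpace E := FiniteDimensional.proper ℂ E
  have : CompleteSpace G := FiniteDimensional.complete ℂ G
  obtain ⟨ε, hε, hεU⟩ := Metric.isOpen_iff.1 hU z₀ hz₀
  set R := ε / 4 with hRdef
  have hR : 0 < R := by positivity
  have hsub : closedBall z₀ (3 * R) ⊆ U :=
    (closedBall_subset_ball (by rw [hRdef]; linarith)).trans hεU
  obtain ⟨C, hC⟩ := (isCompact_closedBall z₀ (3 * R)).exists_bound_of_continuousOn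
    (hf.continuousOn.mono hsub)
  have hC0 : 0 ≤ C := (norm_nonneg _).trans (hC z₀ (mem_closedBall_self (by positivity)))
  have hb : ∀ y ∈ closedBall z₀ (2 * R), ‖fderiv ℂ f y‖ ≤ C / R := by
    intro y hy
    have : closedBall y R ⊆ closedBall z₀ (3 * R) := by
      apply closedBall_subset_closedBall'
      rw [mem_closedBall] at hy; linarith
    exact holo_fderiv_bound hU hf hR (this.trans hsub) fun x hx => hC x (this hx)
  set r := R / (‖v‖ + 1) with hrdef
  have hr : 0 < r := by positivity
  have hrv : r * ‖v‖ ≤ R := by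
    rw [hrdef, div_mul_eq_mul_div, div_le_iff₀ (by positivity)]
    nlinarith [norm_nonneg v]
  have hmem : ∀ y ∈ closedBall z₀ R, ∀ ζ ∈ closedBall (0:ℂ) r, y + ζ • v ∈ closedBall z₀ (2 * R) := by
    intro y hy ζ hζ
    simp only [mem_closedBall, dist_zero_right] at hζ hy ⊢
    calc dist (y + ζ • v) z₀ ≤ dist (y + ζ • v) y + dist y z₀ := dist_triangle _ _ _
      _ ≤ R + R := by
        gcongr
        rw [dist_self_add_left, norm_smul]
        exact (mul_le_mul_of_nonneg_right hζ (norm_nonneg _)).trans hrv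
      _ = 2 * R := by ring
  have hsub2 : closedBall z₀ (2 * R) ⊆ U := (closedBall_subset_closedBall (by linarith)).trans hsub
  have hdf : ∀ y ∈ closedBall z₀ (2 * R), HasFDerivAt f (fderiv ℂ f y) y := fun y hy =>
    ((hf y (hsub2 hy)).differentiableAt (hU.mem_nhds (hsub2 hy))).hasFDerivAt
  -- the integrand
  let c : ℝ → ℂ := circleMap 0 r
  have hcmem : ∀ θ, c θ ∈ closedBall (0:ℂ) r := fun θ => circleMap_mem_closedBall 0 hr.le θ
  have hcc : Continuous c := continuous_circleMap 0 r
  let k : ℝ → ℂ := fun θ => deriv (circleMap 0 r) θ * ((c θ - 0) ^ 2)⁻¹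
  have hk : Continuous k := by
    have h0 : ∀ θ, (c θ - 0) ^ 2 ≠ 0 := fun θ => by
      simp only [sub_zero]; exact pow_ne_zero _ (circleMap_ne_center hr.ne')
    simp only [k, deriv_circleMap]
    exact (by fun_prop : Continuous fun θ => circleMap 0 r θ * Complex.I).mul
      (Continuous.inv₀ (by fun_prop) h0)
  have hform : ∀ y ∈ ball z₀ R, fderiv ℂ f y v =
      (2 * Real.pi * Complex.I : ℂ)⁻¹ • ∫ θ in (0:ℝ)..2 * Real.pi, k θ • f (y + c θ • v) := by
    intro y hy
    have hy' := ball_subset_closedBall hy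
    have hopen : IsOpen {ζ : ℂ | y + ζ • v ∈ U} := hU.preimage (by fun_prop)
    have hd : DifferentiableOn ℂ (fun ζ : ℂ => f (y + ζ • v)) {ζ : ℂ | y + ζ • v ∈ U} :=
      hf.comp (f := fun ζ : ℂ => y + ζ • v) (by fun_prop) (fun ζ hζ => hζ)
    have h1 := Complex.cderiv_eq_deriv hopen hd hr (z := 0)
      (fun ζ hζ => hsub2 (hmem y hy' ζ hζ))
    have hy2 : y ∈ closedBall z₀ (2 * R) := closedBall_subset_closedBall (by linarith) hy'
    have hder : deriv (fun ζ : ℂ => f (y + ζ • v)) 0 = fderiv ℂ f y v := by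
      have h1 : HasFDerivAt f (fderiv ℂ f y) (y + (0:ℂ) • v) := by simpa using hdf y hy2
      have h2 : HasDerivAt (fun ζ : ℂ => y + ζ • v) v 0 := by
        simpa using ((hasDerivAt_id (0:ℂ)).smul_const v).const_add y
      exact (h1.comp_hasDerivAt (0:ℂ) h2).deriv
    rw [← hder, ← h1, Complex.cderiv, circleIntegral]
    simp only [smul_smul, k, c]
  have hev : (fun y => fderiv ℂ f y v) =ᶠ[nhds z₀] fun y =>
      (2 * Real.pi * Complex.I : ℂ)⁻¹ • ∫ θ in (0:ℝ)..2 * Real.pi, k θ • f (y + c θ • v) := by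
    filter_upwards [ball_mem_nhds z₀ hR] with y hy using hform y hy
  refine DifferentiableAt.congr_of_eventuallyEq ?_ hev
  apply DifferentiableAt.const_smul
  have hcontF : ∀ y ∈ ball z₀ R, Continuous fun θ => k θ • f (y + c θ • v) := by
    intro y hy
    refine hk.smul ?_
    rw [continuous_iff_continuousAt]
    intro θ
    have h1 := (hdf _ (hmem y (ball_subset_closedBall hy) (c θ) (hcmem θ))).continuousAt
    exact ContinuousAt.comp (f := fun θ => y + c θ • v) h1 (by fun_prop)
  borelize E
  have hmeas : MeasureTheory.AEStronglyMeasurable (fun θ => k θ • fderiv ℂ f (z₀ + c θ • v))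
      (MeasureTheory.volume.restrict (Set.uIoc (0:ℝ) (2 * Real.pi))) := by
    refine hk.aestronglyMeasurable.smul ?_
    borelize (E →L[ℂ] G)
    have : ProperSpace (E →L[ℂ] G) := FiniteDimensional.proper ℂ _
    have hm : Measurable fun θ => fderiv ℂ f (z₀ + c θ • v) :=
      (measurable_fderiv ℂ f).comp (by fun_prop : Continuous fun θ => z₀ + c θ • v).measurable
    exact hm.aestronglyMeasurable
  refine (intervalIntegral.hasFDerivAt_integral_of_dominated_of_fderiv_le (𝕜 := ℂ)
    (F := fun y θ => k θ • f (y + c θ • v))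
    (F' := fun y θ => k θ • fderiv ℂ f (y + c θ • v))
    (bound := fun θ => ‖k θ‖ * (C / R)) (s := ball z₀ R) (ball_mem_nhds z₀ hR) ?_ ?_ hmeas ?_ ?_ ?_).differentiableAt
  · filter_upwards [ball_mem_nhds z₀ hR] with y hy using (hcontF y hy).aestronglyMeasurable
  · exact (hcontF z₀ (mem_ball_self hR)).intervalIntegrable _ _
  · refine Filter.Eventually.of_forall fun θ _ y hy => ?_
    rw [norm_smul]
    gcongr
    exact hb _ (hmem y (ball_subset_closedBall hy) _ (hcmem θ))
  · exact (hk.norm.mul continuous_const).intervalIntegrable _ _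
  · refine Filter.Eventually.of_forall fun θ _ y hy => ?_
    have h1 := hdf _ (hmem y (ball_subset_closedBall hy) _ (hcmem θ))
    have h2 : HasFDerivAt (fun x => x + c θ • v) (ContinuousLinearMap.id ℂ E) y :=
      (hasFDerivAt_id y).add_const _
    have h3 := HasFDerivAt.comp (f := fun x => x + c θ • v) y h1 h2
    rw [ContinuousLinearMap.comp_id] at h3
    exact h3.const_smul (k θ)
end Part1

section Part2
open scoped BigOperators

abbrev Vn (n : ℕ) := Fin n → ℂ
abbrev Bil (n : ℕ) := Vn n →L[ℂ] Vn n →L[ℂ] Vn n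

/-- the `k`-th standard vector -/
def bv (n : ℕ) (k : Fin n) : Vn n := Pi.single k 1

/-- normalised trace form -/
def aL {n : ℕ} (g : Bil n) : Vn n →L[ℂ] ℂ :=
  (1 / ((n : ℂ) + 1)) • ∑ k, (ContinuousLinearMap.proj k : Vn n →L[ℂ] ℂ).comp (g.flip (bv n k))

theorem aL_apply {n : ℕ} (g : Bil n) (v : Vn n) :
    aL g v = (1 / ((n : ℂ) + 1)) * ∑ k, g v (bv n k) k := by
  simp [aL]

/-- trace free part -/
def SL {n : ℕ} (g : Bil n) (v w : Vn n) : Vn n := g v w - aL g v • w - aL g w • v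

structure IsFrame (n : ℕ) (U : Set (Vn n)) (M : Vn n → Vn n →L[ℂ] Vn n) (Γ : Vn n → Bil n) : Prop where
  diffM : DifferentiableOn ℂ M U
  diffG : DifferentiableOn ℂ Γ U
  inj : ∀ z ∈ U, ∀ v, M z v = 0 → v = 0
  der : ∀ z ∈ U, ∀ v w, fderiv ℂ M z v w = M z (Γ z v w)
  symm : ∀ z ∈ U, ∀ v w, Γ z v w = Γ z w v

theorem IsFrame.flat {n : ℕ} {U : Set (Vn n)} {M : Vn n → Vn n →L[ℂ] Vn n} {Γ : Vn n → Bil n}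
    (h : IsFrame n U M Γ) (hU : IsOpen U) {z : Vn n} (hz : z ∈ U) (v w x : Vn n) :
    fderiv ℂ Γ z v x w - fderiv ℂ Γ z w x v + Γ z v (Γ z x w) - Γ z w (Γ z x v) = 0 := by
  have hMd : ∀ y ∈ U, HasFDerivAt M (fderiv ℂ M y) y := fun y hy =>
    ((h.diffM y hy).differentiableAt (hU.mem_nhds hy)).hasFDerivAt
  have hGd : ∀ y ∈ U, HasFDerivAt Γ (fderiv ℂ Γ y) y := fun y hy =>
    ((h.diffG y hy).differentiableAt (hU.mem_nhds hy)).hasFDerivAt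
  have h1 : ∀ᶠ y in nhds z, HasFDerivAt (fun y => M y x) ((M y).comp (Γ y x)) y := by
    filter_upwards [hU.mem_nhds hz] with y hy
    have := (hMd y hy).clm_apply (hasFDerivAt_const x y)
    refine this.congr_fderiv ?_
    ext1 w
    simp [h.der y hy, h.symm y hy x w]
  have h2 : HasFDerivAt (fun y => Γ y x) ((fderiv ℂ Γ z).flip x) z := by
    have := (hGd z hz).clm_apply (hasFDerivAt_const x z)
    simpa using this
  have h3 := (hMd z hz).clm_comp h2
  have h4 := second_derivative_symmetric_of_eventually h1 h3 v w
  simp [h.der z hz] at h4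
  have h5 : M z (fderiv ℂ Γ z v x w - fderiv ℂ Γ z w x v + Γ z v (Γ z x w) - Γ z w (Γ z x v)) = 0 := by
    simp only [map_add, map_sub]
    linear_combination h4
  exact h.inj z hz _ h5

theorem sum_bv {n : ℕ} (a : Vn n →L[ℂ] ℂ) (x : Vn n) : ∑ k, a (bv n k) * x k = a x := by
  have := LinearMap.pi_apply_eq_sum_univ (a : Vn n →ₗ[ℂ] ℂ) x
  simp only [ContinuousLinearMap.coe_coe, smul_eq_mul] at this
  rw [this]
  refine Finset.sum_congr rfl fun k _ => ?_
  rw [mul_comm]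
  congr 2
  ext j
  simp [bv, Pi.single_apply, eq_comm]

theorem tr_sq {n : ℕ} (g : Bil n) (e : Vn n) :
    ∑ k, g e (g e (bv n k)) k = ∑ k, SL g e (SL g e (bv n k)) k + 2 * aL g (SL g e e)
      + ((n : ℂ) + 3) * aL g e ^ 2 := by
  have hexp : ∀ w, SL g e (SL g e w) = g e (g e w) - (2 * aL g e) • g e w - aL g w • g e e
      + (aL g e ^ 2) • w + (3 * aL g e * aL g w) • e - aL g (g e w) • e := by
    intro w
    simp only [SL, map_sub, map_smul, smul_eq_mul]
    ext j
    simp only [Pi.sub_apply, Pi.add_apply, Pi.smul_apply, smul_eq_mul]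
    ring
  have h0 : ((n : ℂ) + 1) ≠ 0 := by exact_mod_cast Nat.succ_ne_zero n
  have htr : ∑ k, g e (bv n k) k = ((n : ℂ) + 1) * aL g e := by
    rw [aL_apply]; field_simp
  have h1 := sum_bv (aL g) (g e e)
  have h2 := sum_bv ((aL g).comp (g e)) e
  have h3 := sum_bv (aL g) e
  have h4 : ∑ k : Fin n, bv n k k = n := by simp [bv]
  simp only [hexp, Pi.sub_apply, Pi.add_apply, Pi.smul_apply, smul_eq_mul, Finset.sum_sub_distrib,
    Finset.sum_add_distrib, ← Finset.mul_sum, mul_assoc]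
  simp only [ContinuousLinearMap.comp_apply] at h2
  rw [htr, h1, h2, h3, h4]
  have h5 : aL g (SL g e e) = aL g (g e e) - 2 * aL g e ^ 2 := by
    simp only [SL, map_sub, map_smul, smul_eq_mul]; ring
  rw [h5]
  ring

theorem fderiv_aL {n : ℕ} {U : Set (Vn n)} {Γ : Vn n → Bil n} (hU : IsOpen U)
    (hG : DifferentiableOn ℂ Γ U) {z : Vn n} (hz : z ∈ U) (e : Vn n) :
    HasFDerivAt (fun y => aL (Γ y) e)
      ((1 / ((n : ℂ) + 1)) • ∑ k, (ContinuousLinearMap.proj k : Vn n →L[ℂ] ℂ).comp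
        (((fderiv ℂ Γ z).flip e).flip (bv n k))) z := by
  have hGd : HasFDerivAt Γ (fderiv ℂ Γ z) z :=
    ((hG z hz).differentiableAt (hU.mem_nhds hz)).hasFDerivAt
  simp only [aL_apply]
  apply HasFDerivAt.const_mul
  apply HasFDerivAt.fun_sum
  intro k _
  have h1 := (hGd.clm_apply (hasFDerivAt_const e z)).clm_apply (hasFDerivAt_const (bv n k) z)
  have h2 := (hasFDerivAt_pi'.1 h1) k
  refine h2.congr_fderiv ?_
  ext1 w
  simp

theorem IsFrame.ident {n : ℕ} {U : Set (Vn n)} {M : Vn n → Vn n →L[ℂ] Vn n} {Γ : Vn n → Bil n}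
    (h : IsFrame n U M Γ) (hU : IsOpen U) {z : Vn n} (hz : z ∈ U) (e : Vn n) :
    ((n : ℂ) - 1) * fderiv ℂ (fun y => aL (Γ y) e) z e =
      ∑ k, fderiv ℂ (fun y => SL (Γ y) e e) z (bv n k) k
      + ((n : ℂ) - 1) * aL (Γ z) (SL (Γ z) e e) + ((n : ℂ) - 1) * aL (Γ z) e ^ 2
      - ∑ k, SL (Γ z) e (SL (Γ z) e (bv n k)) k := by
  have h0 : ((n : ℂ) + 1) ≠ 0 := by exact_mod_cast Nat.succ_ne_zero n
  have hGd : HasFDerivAt Γ (fderiv ℂ Γ z) z :=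
    ((h.diffG z hz).differentiableAt (hU.mem_nhds hz)).hasFDerivAt
  have ha := fderiv_aL hU h.diffG hz e
  set A := fderiv ℂ (fun y => aL (Γ y) e) z with hA
  have hA' : ∀ v, A v = (1 / ((n : ℂ) + 1)) * ∑ k, fderiv ℂ Γ z v e (bv n k) k := by
    intro v; rw [hA, ha.fderiv]; simp
  have ha' : HasFDerivAt (fun y => aL (Γ y) e) A z := by rw [hA]; exact ha.differentiableAt.hasFDerivAt
  have hS : ∀ v, fderiv ℂ (fun y => SL (Γ y) e e) z v = fderiv ℂ Γ z v e e - (2 * A v) • e := by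
    intro v
    have h1 := (hGd.clm_apply (hasFDerivAt_const e z)).clm_apply (hasFDerivAt_const e z)
    have h2 := (h1.sub (ha'.smul_const e)).sub (ha'.smul_const e)
    have h3 : fderiv ℂ (fun y => SL (Γ y) e e) z = _ := h2.fderiv
    rw [h3]
    simp
    ext j
    simp
    ring
  have hfl : ∑ k, (fderiv ℂ Γ z (bv n k) e e - fderiv ℂ Γ z e e (bv n k)
      + Γ z (bv n k) (Γ z e e) - Γ z e (Γ z e (bv n k))) k = 0 :=
    Finset.sum_eq_zero fun k _ => by rw [h.flat hU hz]; rfl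
  have htr : ∑ k, Γ z (bv n k) (Γ z e e) k = ((n : ℂ) + 1) * aL (Γ z) (Γ z e e) := by
    rw [aL_apply]
    field_simp
    exact Finset.sum_congr rfl fun k _ => by rw [h.symm z hz]
  have h5 : aL (Γ z) (SL (Γ z) e e) = aL (Γ z) (Γ z e e) - 2 * aL (Γ z) e ^ 2 := by
    simp only [SL, map_sub, map_smul, smul_eq_mul]; ring
  have htr2 : ∑ k, fderiv ℂ Γ z e e (bv n k) k = ((n : ℂ) + 1) * A e := by
    rw [hA']; field_simp
  have h6 := sum_bv A e
  simp only [Pi.sub_apply, Pi.add_apply, Finset.sum_sub_distrib, Finset.sum_add_distrib] at hfl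
  rw [htr, tr_sq, htr2] at hfl
  simp only [hS, Pi.sub_apply, Pi.smul_apply, smul_eq_mul, Finset.sum_sub_distrib, mul_assoc,
    ← Finset.mul_sum]
  rw [h6]
  rw [h5] at hfl ⊢
  linear_combination -hfl
end Part2

section Part3
open scoped BigOperators ComplexConjugate

def ip {n : ℕ} (v w : Vn n) : ℂ := ∑ i, v i * conj (w i)
def nsq {n : ℕ} (v : Vn n) : ℝ := ∑ i, ‖v i‖ ^ 2

theorem ip_self {n : ℕ} (v : Vn n) : ip v v = (nsq v : ℂ) := by
  simp only [ip, nsq, Complex.mul_conj, Complex.normSq_eq_norm_sq]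
  push_cast; rfl
theorem ip_conj {n : ℕ} (v w : Vn n) : conj (ip v w) = ip w v := by
  simp only [ip, map_sum, map_mul, Complex.conj_conj]
  exact Finset.sum_congr rfl fun i _ => mul_comm _ _
theorem ip_add_left {n : ℕ} (u v w : Vn n) : ip (u + v) w = ip u w + ip v w := by
  simp [ip, add_mul, Finset.sum_add_distrib]
theorem ip_sub_left {n : ℕ} (u v w : Vn n) : ip (u - v) w = ip u w - ip v w := by
  simp [ip, sub_mul, Finset.sum_sub_distrib]
theorem ip_smul_left {n : ℕ} (a : ℂ) (v w : Vn n) : ip (a • v) w = a * ip v w := by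
  simp [ip, Finset.mul_sum, mul_assoc]
theorem ip_add_right {n : ℕ} (u v w : Vn n) : ip u (v + w) = ip u v + ip u w := by
  simp [ip, mul_add, Finset.sum_add_distrib]
theorem ip_sub_right {n : ℕ} (u v w : Vn n) : ip u (v - w) = ip u v - ip u w := by
  simp [ip, mul_sub, Finset.sum_sub_distrib]
theorem ip_smul_right {n : ℕ} (a : ℂ) (v w : Vn n) : ip v (a • w) = conj a * ip v w := by
  simp only [ip, Finset.mul_sum, Pi.smul_apply, smul_eq_mul, map_mul]
  exact Finset.sum_congr rfl fun i _ => by ring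
theorem nsq_nonneg {n : ℕ} (v : Vn n) : 0 ≤ nsq v := Finset.sum_nonneg fun i _ => by positivity
theorem nsq_eq_zero {n : ℕ} {v : Vn n} (h : nsq v = 0) : v = 0 := by
  rw [nsq, Finset.sum_eq_zero_iff_of_nonneg (fun i _ => by positivity)] at h
  ext i
  simpa using h i (Finset.mem_univ i)
theorem nsq_smul {n : ℕ} (a : ℂ) (v : Vn n) : nsq (a • v) = ‖a‖ ^ 2 * nsq v := by
  simp [nsq, Finset.mul_sum, mul_pow]
theorem nsq_continuous {n : ℕ} : Continuous (nsq : Vn n → ℝ) := by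
  unfold nsq; fun_prop

theorem ip_cs {n : ℕ} (v w : Vn n) : ‖ip v w‖ ^ 2 ≤ nsq v * nsq w := by
  have h := norm_inner_le_norm (𝕜 := ℂ) (WithLp.toLp 2 w : EuclideanSpace ℂ (Fin n)) (WithLp.toLp 2 v)
  have h1 : inner ℂ (WithLp.toLp 2 w : EuclideanSpace ℂ (Fin n)) (WithLp.toLp 2 v) = ip v w := by
    simp [PiLp.inner_apply, ip]
  have h2 : ∀ u : Vn n, ‖(WithLp.toLp 2 u : EuclideanSpace ℂ (Fin n))‖ ^ 2 = nsq u := by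
    intro u; rw [EuclideanSpace.norm_sq_eq]; rfl
  rw [h1] at h
  calc ‖ip v w‖ ^ 2 ≤ _ := pow_le_pow_left₀ (norm_nonneg _) h 2
    _ = _ := by rw [mul_pow, h2, h2, mul_comm]

/-- normalised Bergman norm squared -/
def qB {n : ℕ} (z v : Vn n) : ℝ := (nsq v * (1 - nsq z) + ‖ip v z‖ ^ 2) / (1 - nsq z) ^ 2

theorem qB_cast {n : ℕ} (z v : Vn n) : (qB z v : ℂ) =
    (ip v v * (1 - ip z z) + ip v z * ip z v) / (1 - ip z z) ^ 2 := by
  rw [← ip_conj v z, Complex.mul_conj, Complex.normSq_eq_norm_sq, ip_self, ip_self, qB]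
  push_cast; rfl

def ipL {n : ℕ} (c : Vn n) : Vn n →L[ℂ] ℂ :=
  ∑ i, conj (c i) • (ContinuousLinearMap.proj i : Vn n →L[ℂ] ℂ)
theorem ipL_apply {n : ℕ} (c v : Vn n) : ipL c v = ip v c := by
  simp [ipL, ip, mul_comm]

def Lc {n : ℕ} (c : Vn n) (s : ℝ) : Vn n →L[ℂ] Vn n :=
  (s : ℂ) • ContinuousLinearMap.id ℂ (Vn n) + ((1 + s : ℂ)⁻¹ • ipL c).smulRight c
theorem Lc_apply {n : ℕ} (c v : Vn n) (s : ℝ) :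
    Lc c s v = (s : ℂ) • v + ((1 + s : ℂ)⁻¹ * ip v c) • c := by
  simp [Lc, ipL_apply]

def den {n : ℕ} (c z : Vn n) : ℂ := 1 + ip z c
def sig {n : ℕ} (c : Vn n) (s : ℝ) (z : Vn n) : Vn n := (den c z)⁻¹ • (c + Lc c s z)
def Tm {n : ℕ} (c : Vn n) (s : ℝ) (z : Vn n) : Vn n →L[ℂ] Vn n :=
  (den c z)⁻¹ • (Lc c s - (ipL c).smulRight (sig c s z))
theorem Tm_apply {n : ℕ} (c : Vn n) (s : ℝ) (z v : Vn n) :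
    Tm c s z v = (den c z)⁻¹ • (Lc c s v - ip v c • sig c s z) := by
  simp [Tm, ipL_apply]

theorem den_ne {n : ℕ} {c z : Vn n} (hc : nsq c < 1) (hz : nsq z < 1) : den c z ≠ 0 := by
  intro h
  have h1 : ip z c = -1 := by rw [den] at h; linear_combination h
  have h2 := ip_cs z c
  rw [h1] at h2
  simp at h2
  nlinarith [nsq_nonneg c, nsq_nonneg z]

section
variable {n : ℕ} {c : Vn n} {s : ℝ}

theorem s_ne (hs : 0 < s) : (1 + s : ℂ) ≠ 0 := by
  exact_mod_cast (by positivity : (1 + s : ℝ) ≠ 0)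

theorem sC (hs2 : s ^ 2 = 1 - nsq c) : ip c c = 1 - (s : ℂ) ^ 2 := by
  rw [ip_self]
  have : nsq c = 1 - s ^ 2 := by linarith
  rw [this]; push_cast; ring

theorem idL (hs : 0 < s) (hs2 : s ^ 2 = 1 - nsq c) (v w : Vn n) :
    ip (Lc c s v) (Lc c s w) = ip v c * ip c w + (s : ℂ) ^ 2 * ip v w := by
  have h := s_ne hs
  simp only [Lc_apply, ip_add_left, ip_add_right, ip_smul_left, ip_smul_right, map_mul, map_inv₀,
    map_add, map_one, Complex.conj_ofReal, sC hs2, ip_conj]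
  field_simp
  ring

theorem idLc (hs : 0 < s) (hs2 : s ^ 2 = 1 - nsq c) (v : Vn n) :
    ip (Lc c s v) c = ip v c := by
  have h := s_ne hs
  simp only [Lc_apply, ip_add_left, ip_smul_left, sC hs2]
  field_simp
  ring

theorem idcL (hs : 0 < s) (hs2 : s ^ 2 = 1 - nsq c) (v : Vn n) :
    ip c (Lc c s v) = ip c v := by
  rw [← ip_conj, idLc hs hs2, ip_conj]

theorem den_conj (z : Vn n) : conj (den c z) = 1 + ip c z := by
  simp [den, ip_conj]

theorem sig_ip (hs : 0 < s) (hs2 : s ^ 2 = 1 - nsq c) {z : Vn n} (hd : den c z ≠ 0) :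
    1 - ip (sig c s z) (sig c s z) =
      (s : ℂ) ^ 2 * (1 - ip z z) / (den c z * conj (den c z)) := by
  have hd' : conj (den c z) ≠ 0 := by simpa using hd
  simp only [sig, ip_add_left, ip_add_right, ip_smul_left, ip_smul_right, map_inv₀, idL hs hs2,
    idLc hs hs2, idcL hs hs2, sC hs2]
  field_simp
  rw [den_conj, den]
  ring

theorem sig_T (hs : 0 < s) (hs2 : s ^ 2 = 1 - nsq c) {z : Vn n} (hd : den c z ≠ 0) (v : Vn n) :
    ip (Tm c s z v) (sig c s z) = (s : ℂ) ^ 2 / (den c z * conj (den c z)) *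
      (ip v z + ip v c / den c z * (1 - ip z z)) := by
  have hd' : conj (den c z) ≠ 0 := by simpa using hd
  have h1 := sig_ip hs hs2 hd
  have h2 : ip (sig c s z) (sig c s z) = 1 - (s : ℂ) ^ 2 * (1 - ip z z) / (den c z * conj (den c z)) := by
    linear_combination -h1
  rw [Tm_apply, ip_smul_left, ip_sub_left, ip_smul_left, h2]
  simp only [sig, ip_add_right, ip_smul_right, map_inv₀, idL hs hs2, idLc hs hs2]
  field_simp
  rw [den_conj, den]
  ring

theorem sig_TT (hs : 0 < s) (hs2 : s ^ 2 = 1 - nsq c) {z : Vn n} (hd : den c z ≠ 0) (v : Vn n) :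
    ip (Tm c s z v) (Tm c s z v) = (s : ℂ) ^ 2 / (den c z * conj (den c z)) *
      (ip v v - ip v z * ip c v / conj (den c z) - ip z v * ip v c / den c z
        - ip v c * ip c v * (1 - ip z z) / (den c z * conj (den c z))) := by
  have hd' : conj (den c z) ≠ 0 := by simpa using hd
  have h1 := sig_ip hs hs2 hd
  have h2 : ip (sig c s z) (sig c s z) = 1 - (s : ℂ) ^ 2 * (1 - ip z z) / (den c z * conj (den c z)) := by
    linear_combination -h1
  have h3 : ip (Lc c s v) (sig c s z) = ip v c + (s : ℂ) ^ 2 * ip v z / conj (den c z) := by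
    simp only [sig, ip_add_right, ip_smul_right, map_inv₀, idL hs hs2, idLc hs hs2]
    field_simp
    rw [den_conj]; ring
  have h4 : ip (sig c s z) (Lc c s v) = ip c v + (s : ℂ) ^ 2 * ip z v / den c z := by
    simp only [sig, ip_add_left, ip_smul_left, idL hs hs2, idcL hs hs2]
    field_simp
    rw [den]; ring
  rw [Tm_apply]
  simp only [ip_smul_left, ip_sub_left, ip_smul_right, ip_sub_right, h2, h3, h4, idL hs hs2, map_inv₀,
    ip_conj]
  field_simp
  ring

theorem qB_inv (hs : 0 < s) (hs2 : s ^ 2 = 1 - nsq c) {z : Vn n} (hz : nsq z < 1) (v : Vn n) :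
    qB (sig c s z) (Tm c s z v) = qB z v := by
  have hd : den c z ≠ 0 := den_ne (by nlinarith) hz
  have hd' : conj (den c z) ≠ 0 := by simpa using hd
  have hs0 : (s : ℂ) ≠ 0 := by exact_mod_cast hs.ne'
  have hP : (1 : ℂ) - ip z z ≠ 0 := by
    rw [ip_self]; exact_mod_cast (by linarith : (1 : ℝ) - nsq z ≠ 0)
  have key : ((qB (sig c s z) (Tm c s z v) : ℝ) : ℂ) = (qB z v : ℝ) := by
    rw [qB_cast, qB_cast, sig_ip hs hs2 hd, ← ip_conj (Tm c s z v) (sig c s z), sig_TT hs hs2 hd,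
      sig_T hs hs2 hd]
    simp only [map_mul, map_div₀, map_add, map_sub, map_one, map_pow, Complex.conj_ofReal, ip_conj,
      Complex.conj_conj]
    field_simp
    ring
  exact_mod_cast key

theorem sig_ball (hs : 0 < s) (hs2 : s ^ 2 = 1 - nsq c) {z : Vn n} (hz : nsq z < 1) :
    nsq (sig c s z) < 1 := by
  have hd : den c z ≠ 0 := den_ne (by nlinarith) hz
  have h := sig_ip hs hs2 hd
  rw [Complex.mul_conj, Complex.normSq_eq_norm_sq, ip_self, ip_self] at h
  have h' : 1 - nsq (sig c s z) = s ^ 2 * (1 - nsq z) / ‖den c z‖ ^ 2 := by exact_mod_cast h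
  have : 0 < ‖den c z‖ := norm_pos_iff.2 hd
  have : 0 < s ^ 2 * (1 - nsq z) / ‖den c z‖ ^ 2 := by
    have : 0 < 1 - nsq z := by linarith
    positivity
  linarith

/-- invariance of the form -/
theorem sig_form (hs : 0 < s) (hs2 : s ^ 2 = 1 - nsq c) {z : Vn n} (hz : nsq z < 1) (v : Vn n) :
    ip (Tm c s z v) (sig c s z) / (1 - ip (sig c s z) (sig c s z)) =
      ip v z / (1 - ip z z) + ip v c / den c z := by
  have hd : den c z ≠ 0 := den_ne (by nlinarith) hz
  have hd' : conj (den c z) ≠ 0 := by simpa using hd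
  have hs0 : (s : ℂ) ≠ 0 := by exact_mod_cast hs.ne'
  have hP : (1 : ℂ) - ip z z ≠ 0 := by
    rw [ip_self]; exact_mod_cast (by linarith : (1 : ℝ) - nsq z ≠ 0)
  rw [sig_ip hs hs2 hd, sig_T hs hs2 hd]
  field_simp

theorem qB_eq_zero {z v : Vn n} (hz : nsq z < 1) (h : qB z v = 0) : v = 0 := by
  have hP : 0 < 1 - nsq z := by linarith
  rw [qB, div_eq_zero_iff] at h
  rcases h with h | h
  · have : nsq v * (1 - nsq z) = 0 := by
      nlinarith [mul_nonneg (nsq_nonneg v) hP.le, sq_nonneg ‖ip v z‖]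
    exact nsq_eq_zero ((mul_eq_zero.1 this).resolve_right hP.ne')
  · exact absurd h (by positivity)

theorem Tm_inj (hs : 0 < s) (hs2 : s ^ 2 = 1 - nsq c) {z : Vn n} (hz : nsq z < 1) (v : Vn n)
    (h : Tm c s z v = 0) : v = 0 := by
  apply qB_eq_zero hz
  rw [← qB_inv hs hs2 hz, h]
  simp [qB, nsq, ip]

theorem den_hasFDeriv (z : Vn n) : HasFDerivAt (den c) (ipL c) z := by
  have : den c = fun z => 1 + ipL c z := by ext z; simp [den, ipL_apply]
  rw [this]
  exact (ipL c).hasFDerivAt.const_add 1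

theorem den_inv_hasFDeriv {z : Vn n} (hd : den c z ≠ 0) :
    HasFDerivAt (fun z => (den c z)⁻¹) (-(((den c z) ^ 2)⁻¹ • ipL c)) z := by
  have := (hasDerivAt_inv hd).comp_hasFDerivAt z (den_hasFDeriv (c := c) z)
  refine HasFDerivAt.congr_fderiv (f := fun z => (den c z)⁻¹) this ?_
  ext1 v
  simp

theorem sig_hasFDeriv {z : Vn n} (hd : den c z ≠ 0) :
    HasFDerivAt (sig c s) (Tm c s z) z := by
  have h := (den_inv_hasFDeriv hd).smul ((Lc c s).hasFDerivAt.const_add c (x := z))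
  refine h.congr_fderiv ?_
  ext1 v
  simp only [Tm_apply, sig, add_apply, smul_apply,
    ContinuousLinearMap.smulRight_apply, neg_apply, ipL_apply]
  ext j
  simp only [Pi.sub_apply, Pi.add_apply, Pi.smul_apply, smul_eq_mul]
  field_simp
  ring

theorem Tm_hasFDeriv {z : Vn n} (hd : den c z ≠ 0) : DifferentiableAt ℂ (Tm c s) z ∧
    ∀ v w, fderiv ℂ (Tm c s) z v w =
      Tm c s z ((-(ip v c / den c z)) • w + (-(ip w c / den c z)) • v) := by
  have h0 : HasFDerivAt (fun z => (ipL c).smulRight (sig c s z))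
      ((ContinuousLinearMap.smulRightL ℂ (Vn n) (Vn n) (ipL c)).comp (Tm c s z)) z :=
    (ContinuousLinearMap.smulRightL ℂ (Vn n) (Vn n) (ipL c)).hasFDerivAt.comp z (sig_hasFDeriv hd)
  have h : HasFDerivAt (Tm c s) _ z := (den_inv_hasFDeriv hd).smul (h0.const_sub (Lc c s))
  refine ⟨h.differentiableAt, fun v w => ?_⟩
  rw [h.fderiv]
  simp only [map_add, map_smul, Tm_apply, add_apply,
    smul_apply, sub_apply, ContinuousLinearMap.comp_apply,
    ContinuousLinearMap.smulRight_apply, neg_apply, ipL_apply,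
    ContinuousLinearMap.smulRightL_apply_apply]
  ext j
  simp only [Pi.sub_apply, Pi.add_apply, Pi.smul_apply, Pi.neg_apply, smul_eq_mul]
  field_simp
  ring
end
end Part3

section Part4
open scoped BigOperators ComplexConjugate

def GM {n : ℕ} (M : Vn n → Vn n →L[ℂ] Vn n) (z : Vn n) : Bil n :=
  (ContinuousLinearMap.compL ℂ (Vn n) (Vn n) (Vn n) (Ring.inverse (M z))).comp (fderiv ℂ M z)

theorem clm_isUnit {n : ℕ} {A : Vn n →L[ℂ] Vn n} (h : ∀ v, A v = 0 → v = 0) : IsUnit A := by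
  have hinj : Function.Injective (A : Vn n →ₗ[ℂ] Vn n) := by
    rw [injective_iff_map_eq_zero]; exact h
  let e := (LinearEquiv.ofInjectiveEndo (A : Vn n →ₗ[ℂ] Vn n) hinj).toContinuousLinearEquiv
  have : (e : Vn n →L[ℂ] Vn n) = A := by
    ext1 v; rfl
  rw [← this]
  exact (ContinuousLinearEquiv.unitsEquiv ℂ (Vn n)).symm e |>.isUnit

theorem GM_spec {n : ℕ} {M : Vn n → Vn n →L[ℂ] Vn n} {z : Vn n} (h : ∀ v, M z v = 0 → v = 0)
    (v w : Vn n) : M z (GM M z v w) = fderiv ℂ M z v w := by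
  have h1 := Ring.mul_inverse_cancel (M z) (clm_isUnit h)
  have h2 := congrArg (fun A : Vn n →L[ℂ] Vn n => A (fderiv ℂ M z v w)) h1
  simpa [GM] using h2

theorem isFrame_GM {n : ℕ} {U : Set (Vn n)} (hU : IsOpen U) {M : Vn n → Vn n →L[ℂ] Vn n}
    (hM : DifferentiableOn ℂ M U) (hinj : ∀ z ∈ U, ∀ v, M z v = 0 → v = 0)
    (hsym : ∀ z ∈ U, ∀ v w, fderiv ℂ M z v w = fderiv ℂ M z w v) : IsFrame n U M (GM M) := by
  refine ⟨hM, ?_, hinj, fun z hz v w => (GM_spec (hinj z hz) v w).symm, ?_⟩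
  · intro z hz
    have h1 := (holo_fderiv hU hM z hz)
    have h2 : DifferentiableAt ℂ Ring.inverse (M z) := by
      obtain ⟨u, hu⟩ := clm_isUnit (hinj z hz)
      rw [← hu]
      exact differentiableAt_inverse (𝕜 := ℂ) u.isUnit
    have h3 : DifferentiableWithinAt ℂ (fun z => Ring.inverse (M z)) U z :=
      h2.comp_differentiableWithinAt z (hM z hz)
    exact ((ContinuousLinearMap.compL ℂ (Vn n) (Vn n) (Vn n)).differentiableAt.comp_differentiableWithinAt z h3).clm_comp h1
  · intro z hz v w
    have : M z (GM M z v w - GM M z w v) = 0 := by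
      rw [map_sub, GM_spec (hinj z hz), GM_spec (hinj z hz), hsym z hz v w, sub_self]
    exact sub_eq_zero.1 (hinj z hz _ this)

def B (n : ℕ) : Set (Vn n) := {z | nsq z < 1}
theorem B_open (n : ℕ) : IsOpen (B n) := isOpen_lt nsq_continuous continuous_const

def Mt {n : ℕ} (M : Vn n → Vn n →L[ℂ] Vn n) (r : ℝ) (c : Vn n) (s : ℝ) (z : Vn n) :
    Vn n →L[ℂ] Vn n := (M ((r : ℂ) • sig c s z)).comp (Tm c s z)

theorem r_ball {n : ℕ} {r : ℝ} (hr0 : 0 < r) (hr1 : r < 1) {y : Vn n} (hy : nsq y ≤ 1) :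
    (r : ℂ) • y ∈ B n := by
  show nsq _ < 1
  rw [nsq_smul]
  simp only [Complex.norm_real, Real.norm_eq_abs, sq_abs]
  nlinarith [nsq_nonneg y]

section
variable {n : ℕ} {M : Vn n → Vn n →L[ℂ] Vn n} {Γ : Vn n → Bil n} {r : ℝ} {c : Vn n} {s : ℝ}

theorem Mt_deriv (h : IsFrame n (B n) M Γ) (hr0 : 0 < r) (hr1 : r < 1) (hs : 0 < s)
    (hs2 : s ^ 2 = 1 - nsq c) {z : Vn n} (hz : z ∈ B n) :
    DifferentiableAt ℂ (Mt M r c s) z ∧ ∀ v w, fderiv ℂ (Mt M r c s) z v w =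
      M ((r : ℂ) • sig c s z) ((r : ℂ) • Γ ((r : ℂ) • sig c s z) (Tm c s z v) (Tm c s z w) +
       Tm c s z ((-(ip v c / den c z)) • w + (-(ip w c / den c z)) • v)) := by
  have hd : den c z ≠ 0 := den_ne (by nlinarith) hz
  have hy : (r : ℂ) • sig c s z ∈ B n := r_ball hr0 hr1 (sig_ball hs hs2 hz).le
  have hM : HasFDerivAt M (fderiv ℂ M ((r : ℂ) • sig c s z)) ((r : ℂ) • sig c s z) :=
    ((h.diffM _ hy).differentiableAt ((B_open n).mem_nhds hy)).hasFDerivAt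
  have h1 := HasFDerivAt.comp (f := fun z => (r : ℂ) • sig c s z) z hM ((sig_hasFDeriv hd).const_smul (r : ℂ))
  obtain ⟨hT, hT'⟩ := Tm_hasFDeriv (s := s) hd
  have h2 : HasFDerivAt (Mt M r c s) _ z := h1.clm_comp hT.hasFDerivAt
  refine ⟨h2.differentiableAt, fun v w => ?_⟩
  rw [h2.fderiv]
  simp only [add_apply, ContinuousLinearMap.comp_apply, ContinuousLinearMap.compL_apply,
    ContinuousLinearMap.flip_apply, smul_apply, map_smul, h.der _ hy, hT', Function.comp_apply, map_add]
  abel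

theorem Mt_frame (h : IsFrame n (B n) M Γ) (hr0 : 0 < r) (hr1 : r < 1) (hs : 0 < s)
    (hs2 : s ^ 2 = 1 - nsq c) : IsFrame n (B n) (Mt M r c s) (GM (Mt M r c s)) := by
  apply isFrame_GM (B_open n)
  · exact fun z hz => (Mt_deriv h hr0 hr1 hs hs2 hz).1.differentiableWithinAt
  · intro z hz v hv
    exact Tm_inj hs hs2 hz v (h.inj _ (r_ball hr0 hr1 (sig_ball hs hs2 hz).le) _ hv)
  · intro z hz v w
    rw [(Mt_deriv h hr0 hr1 hs hs2 hz).2, (Mt_deriv h hr0 hr1 hs hs2 hz).2,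
      h.symm _ (r_ball hr0 hr1 (sig_ball hs hs2 hz).le), add_comm (_ • w)]

theorem Gt_spec (h : IsFrame n (B n) M Γ) (hr0 : 0 < r) (hr1 : r < 1) (hs : 0 < s)
    (hs2 : s ^ 2 = 1 - nsq c) {z : Vn n} (hz : z ∈ B n) (v w : Vn n) :
    Tm c s z (GM (Mt M r c s) z v w) =
      (r : ℂ) • Γ ((r : ℂ) • sig c s z) (Tm c s z v) (Tm c s z w) +
       Tm c s z ((-(ip v c / den c z)) • w + (-(ip w c / den c z)) • v) := by
  have hy : (r : ℂ) • sig c s z ∈ B n := r_ball hr0 hr1 (sig_ball hs hs2 hz).le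
  have h1 := (Mt_frame h hr0 hr1 hs hs2).der z hz v w
  rw [(Mt_deriv h hr0 hr1 hs hs2 hz).2] at h1
  have h2 := sub_eq_zero.2 h1
  rw [Mt, ContinuousLinearMap.comp_apply, ← map_sub] at h2
  exact (sub_eq_zero.1 (h.inj _ hy _ h2)).symm

theorem aL_trace (g : Bil n) (v : Vn n) :
    aL g v = (1 / ((n : ℂ) + 1)) * LinearMap.trace ℂ (Vn n) (g v : Vn n →ₗ[ℂ] Vn n) := by
  rw [aL_apply, LinearMap.trace_eq_matrix_trace ℂ (Pi.basisFun ℂ (Fin n))]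
  simp [Matrix.trace, LinearMap.toMatrix_apply, bv]

theorem aL_t (h : IsFrame n (B n) M Γ) (hr0 : 0 < r) (hr1 : r < 1) (hs : 0 < s)
    (hs2 : s ^ 2 = 1 - nsq c) {z : Vn n} (hz : z ∈ B n) (v : Vn n) :
    aL (GM (Mt M r c s) z) v =
      (r : ℂ) * aL (Γ ((r : ℂ) • sig c s z)) (Tm c s z v) - ip v c / den c z := by
  have h0 : ((n : ℂ) + 1) ≠ 0 := by exact_mod_cast Nat.succ_ne_zero n
  have hU := clm_isUnit (Tm_inj hs hs2 hz)
  set T := Tm c s z with hT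
  set g := GM (Mt M r c s) z with hg
  set g' := Γ ((r : ℂ) • sig c s z) with hg'
  have hinv : ∀ x, Ring.inverse T (T x) = x := fun x => by
    have := congrArg (fun A : Vn n →L[ℂ] Vn n => A x) (Ring.inverse_mul_cancel T hU)
    simpa using this
  have key : (g v : Vn n →ₗ[ℂ] Vn n) =
      (r : ℂ) • ((Ring.inverse T : Vn n →L[ℂ] Vn n) : Vn n →ₗ[ℂ] Vn n) ∘ₗ
        ((g' (T v) : Vn n →ₗ[ℂ] Vn n) ∘ₗ (T : Vn n →ₗ[ℂ] Vn n))
      + ((-(ip v c / den c z)) • LinearMap.id + ((-(den c z)⁻¹ • ipL c : Vn n →L[ℂ] ℂ) : Vn n →ₗ[ℂ] ℂ).smulRight v) := by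
    refine LinearMap.ext fun w => ?_
    have h1 := congrArg (fun x => (Ring.inverse T : Vn n →L[ℂ] Vn n) x) (Gt_spec h hr0 hr1 hs hs2 hz v w)
    beta_reduce at h1
    rw [← hT, ← hg, ← hg', hinv, map_add, hinv, map_smul] at h1
    simp only [ContinuousLinearMap.coe_coe]
    rw [h1]
    simp [ipL_apply]
    ring_nf
  have hcomp : ((g' (T v) : Vn n →ₗ[ℂ] Vn n) ∘ₗ (T : Vn n →ₗ[ℂ] Vn n)) ∘ₗ
      ((Ring.inverse T : Vn n →L[ℂ] Vn n) : Vn n →ₗ[ℂ] Vn n) = (g' (T v) : Vn n →ₗ[ℂ] Vn n) := by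
    refine LinearMap.ext fun w => ?_
    have := congrArg (fun A : Vn n →L[ℂ] Vn n => A w) (Ring.mul_inverse_cancel T hU)
    simp only [mul_apply_eq_comp, one_apply_eq_self] at this
    simp [this]
  rw [aL_trace, aL_trace, key]
  simp only [map_add, map_smul, LinearMap.trace_id]
  rw [LinearMap.trace_comp_comm', LinearMap.trace_smulRight, hcomp]
  simp [ipL_apply]
  field_simp
  ring

theorem SL_t (h : IsFrame n (B n) M Γ) (hr0 : 0 < r) (hr1 : r < 1) (hs : 0 < s)
    (hs2 : s ^ 2 = 1 - nsq c) {z : Vn n} (hz : z ∈ B n) (v w : Vn n) :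
    Tm c s z (SL (GM (Mt M r c s) z) v w) =
      (r : ℂ) • SL (Γ ((r : ℂ) • sig c s z)) (Tm c s z v) (Tm c s z w) := by
  simp only [SL, map_sub, map_smul, aL_t h hr0 hr1 hs hs2 hz, Gt_spec h hr0 hr1 hs hs2 hz, map_add]
  ext j
  simp only [Pi.sub_apply, Pi.add_apply, Pi.smul_apply, smul_eq_mul]
  ring

theorem qB_nonneg (z v : Vn n) (hz : nsq z < 1) : 0 ≤ qB z v := by
  have hP : 0 < 1 - nsq z := by linarith
  have := nsq_nonneg v
  rw [qB]; positivity

/-- dilation -/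
theorem qB_dil (hr0 : 0 < r) (hr1 : r < 1) {y : Vn n} (hy : nsq y < 1) (X w : Vn n) {β : ℝ}
    (h : qB ((r : ℂ) • y) X ≤ β ^ 2 * qB ((r : ℂ) • y) w ^ 2) :
    qB y ((r : ℂ) • X) ≤ β ^ 2 * qB y w ^ 2 := by
  have hn : nsq ((r : ℂ) • y) = r ^ 2 * nsq y := by rw [nsq_smul]; simp
  have hi : ∀ u : Vn n, ‖ip u ((r : ℂ) • y)‖ ^ 2 = r ^ 2 * ‖ip u y‖ ^ 2 := by
    intro u; rw [ip_smul_right]; simp [mul_pow]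
  have hy0 := nsq_nonneg y
  have hr2 : r ^ 2 < 1 := by nlinarith
  have hr2' : 0 < r ^ 2 := by positivity
  set P := 1 - nsq y with hP
  set P' := 1 - r ^ 2 * nsq y with hP'
  have hPpos : 0 < P := by rw [hP]; linarith
  have hPP : P ≤ P' := by rw [hP, hP']; nlinarith
  have hP'pos : 0 < P' := by linarith
  have hrP : r ^ 2 * P ≤ P' := by rw [hP, hP']; nlinarith
  have e1 : ∀ u, qB y u = nsq u / P + ‖ip u y‖ ^ 2 / P ^ 2 := by
    intro u; rw [qB, ← hP]; field_simp
  have e2 : ∀ u, qB ((r : ℂ) • y) u = nsq u / P' + r ^ 2 * ‖ip u y‖ ^ 2 / P' ^ 2 := by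
    intro u; rw [qB, hn, hi, ← hP']; field_simp
  have a1 : qB y ((r : ℂ) • X) ≤ (P' / P) ^ 2 * qB ((r : ℂ) • y) X := by
    rw [e1, e2, nsq_smul, ip_smul_left]
    simp only [Complex.norm_real, Real.norm_eq_abs, sq_abs, norm_mul, mul_pow]
    have : r ^ 2 * nsq X / P ≤ (P' / P) ^ 2 * (nsq X / P') := by
      have : (P' / P) ^ 2 * (nsq X / P') - r ^ 2 * nsq X / P = nsq X * (P' - r ^ 2 * P) / P ^ 2 := by
        field_simp
      have h2 : 0 ≤ nsq X * (P' - r ^ 2 * P) / P ^ 2 := by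
        have := nsq_nonneg X
        have : 0 ≤ P' - r ^ 2 * P := by linarith
        positivity
      linarith
    have h3 : r ^ 2 * ‖ip X y‖ ^ 2 / P ^ 2 = (P' / P) ^ 2 * (r ^ 2 * ‖ip X y‖ ^ 2 / P' ^ 2) := by
      field_simp
    rw [mul_add, ← h3]
    linarith
  have a2 : qB ((r : ℂ) • y) w ≤ (P / P') * qB y w := by
    rw [e1, e2]
    have h3 : nsq w / P' = (P / P') * (nsq w / P) := by field_simp
    have : (P / P') * (‖ip w y‖ ^ 2 / P ^ 2) - r ^ 2 * ‖ip w y‖ ^ 2 / P' ^ 2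
        = ‖ip w y‖ ^ 2 * (P' - r ^ 2 * P) / (P * P' ^ 2) := by
      field_simp
    have h2 : 0 ≤ ‖ip w y‖ ^ 2 * (P' - r ^ 2 * P) / (P * P' ^ 2) := by
      have : 0 ≤ P' - r ^ 2 * P := by linarith
      positivity
    rw [mul_add, ← h3]
    linarith
  have hq0 : 0 ≤ qB ((r : ℂ) • y) w := qB_nonneg _ _ (by rw [hn]; linarith)
  calc qB y ((r : ℂ) • X) ≤ (P' / P) ^ 2 * qB ((r : ℂ) • y) X := a1
    _ ≤ (P' / P) ^ 2 * (β ^ 2 * qB ((r : ℂ) • y) w ^ 2) := by gcongr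
    _ ≤ (P' / P) ^ 2 * (β ^ 2 * ((P / P') * qB y w) ^ 2) := by gcongr
    _ = β ^ 2 * qB y w ^ 2 := by field_simp

theorem SL_t_bound {β : ℝ} (h : IsFrame n (B n) M Γ) (hr0 : 0 < r) (hr1 : r < 1) (hs : 0 < s)
    (hs2 : s ^ 2 = 1 - nsq c)
    (hb : ∀ z ∈ B n, ∀ v, qB z (SL (Γ z) v v) ≤ β ^ 2 * qB z v ^ 2)
    {z : Vn n} (hz : z ∈ B n) (v : Vn n) :
    qB z (SL (GM (Mt M r c s) z) v v) ≤ β ^ 2 * qB z v ^ 2 := by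
  have hy := sig_ball hs hs2 hz
  rw [← qB_inv hs hs2 hz, SL_t h hr0 hr1 hs hs2 hz, ← qB_inv hs hs2 hz v]
  exact qB_dil hr0 hr1 hy _ _ (hb _ (r_ball hr0 hr1 hy.le) _)
end
end Part4

section Part5
open scoped BigOperators ComplexConjugate

theorem nsq_tri {n : ℕ} (x y : Vn n) : Real.sqrt (nsq (x - y)) ≤ Real.sqrt (nsq x) + Real.sqrt (nsq y) := by
  have h2 : ∀ u : Vn n, ‖(WithLp.toLp 2 u : EuclideanSpace ℂ (Fin n))‖ = Real.sqrt (nsq u) := by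
    intro u; rw [EuclideanSpace.norm_eq]; rfl
  rw [← h2, ← h2, ← h2]
  exact norm_sub_le (WithLp.toLp 2 x : EuclideanSpace ℂ (Fin n)) (WithLp.toLp 2 y)

theorem nsq_par {n : ℕ} (x y : Vn n) : nsq (x + y) + nsq (x - y) = 2 * nsq x + 2 * nsq y := by
  have : ((nsq (x + y) + nsq (x - y) : ℝ) : ℂ) = ((2 * nsq x + 2 * nsq y : ℝ) : ℂ) := by
    push_cast
    simp only [← ip_self, ip_add_left, ip_add_right, ip_sub_left, ip_sub_right]
    ring
  exact_mod_cast this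

theorem nsq_coord {n : ℕ} (x : Vn n) (k : Fin n) : ‖x k‖ ^ 2 ≤ nsq x :=
  Finset.single_le_sum (f := fun i => ‖x i‖ ^ 2) (fun i _ => by positivity) (Finset.mem_univ k)

theorem nsq_bv {n : ℕ} (k : Fin n) : nsq (bv n k) = 1 := by
  rw [nsq, Finset.sum_eq_single k] <;> simp +contextual [bv, Pi.single_apply]

theorem ip_bv {n : ℕ} (x : Vn n) (k : Fin n) : ip x (bv n k) = x k := by
  rw [ip, Finset.sum_eq_single k] <;> simp +contextual [bv, Pi.single_apply]

theorem qB_zero {n : ℕ} (v : Vn n) : qB 0 v = nsq v := by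
  simp [qB, nsq, ip]

theorem SL_polar {n : ℕ} {g : Bil n} (hs : ∀ v w, g v w = g w v) (v w : Vn n) :
    (4 : ℂ) • SL g v w = SL g (v + w) (v + w) - SL g (v - w) (v - w) := by
  simp only [SL, map_add, map_sub, add_apply, sub_apply, hs w v]
  ext j
  simp only [Pi.add_apply, Pi.sub_apply, Pi.smul_apply, smul_eq_mul]
  ring

theorem SL_unit {n : ℕ} {g : Bil n} (hs : ∀ v w, g v w = g w v) {β : ℝ} (hβ : 0 ≤ β)
    (hb : ∀ v, nsq (SL g v v) ≤ β ^ 2 * nsq v ^ 2) {v w : Vn n} (hv : nsq v = 1) (hw : nsq w = 1) :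
    nsq (SL g v w) ≤ β ^ 2 := by
  have h1 : ∀ v, Real.sqrt (nsq (SL g v v)) ≤ β * nsq v := by
    intro v
    rw [Real.sqrt_le_iff]
    exact ⟨mul_nonneg hβ (nsq_nonneg v), by rw [mul_pow]; exact hb v⟩
  have h2 := nsq_tri (SL g (v + w) (v + w)) (SL g (v - w) (v - w))
  rw [← SL_polar hs] at h2
  have h3 : Real.sqrt (nsq ((4 : ℂ) • SL g v w)) ≤ 4 * β := by
    have := nsq_par v w
    rw [hv, hw] at this
    nlinarith [h1 (v + w), h1 (v - w)]
  rw [Real.sqrt_le_left (by positivity), nsq_smul] at h3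
  norm_num at h3
  nlinarith

def SLm {n : ℕ} (g : Bil n) (e : Vn n) : Vn n →L[ℂ] Vn n :=
  g e - aL g e • ContinuousLinearMap.id ℂ (Vn n) - (aL g).smulRight e
theorem SLm_apply {n : ℕ} (g : Bil n) (e w : Vn n) : SLm g e w = SL g e w := by
  simp [SLm, SL]

theorem SL_tr {n : ℕ} {g : Bil n} (hs : ∀ v w, g v w = g w v) {β : ℝ} (hβ : 0 ≤ β)
    (hb : ∀ v, nsq (SL g v v) ≤ β ^ 2 * nsq v ^ 2) {e : Vn n} (he : nsq e = 1) :
    ‖∑ k, SL g e (SL g e (bv n k)) k‖ ≤ n * β ^ 2 := by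
  have h1 : ∀ k, SL g e (SL g e (bv n k)) k = ∑ m, SL g e (bv n m) k * SL g e (bv n k) m := by
    intro k
    have := sum_bv ((ContinuousLinearMap.proj k : Vn n →L[ℂ] ℂ).comp (SLm g e)) (SL g e (bv n k))
    simp only [ContinuousLinearMap.comp_apply, SLm_apply, ContinuousLinearMap.proj_apply] at this
    exact this.symm
  simp only [h1]
  calc ‖∑ k, ∑ m, SL g e (bv n m) k * SL g e (bv n k) m‖
      ≤ ∑ k, ∑ m, ‖SL g e (bv n m) k * SL g e (bv n k) m‖ :=
        (norm_sum_le _ _).trans (Finset.sum_le_sum fun k _ => norm_sum_le _ _)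
    _ ≤ ∑ k, ∑ m, (1 / 2 * ‖SL g e (bv n m) k‖ ^ 2 + 1 / 2 * ‖SL g e (bv n k) m‖ ^ 2) := by
        refine Finset.sum_le_sum fun k _ => Finset.sum_le_sum fun m _ => ?_
        rw [norm_mul]
        nlinarith [sq_nonneg (‖SL g e (bv n m) k‖ - ‖SL g e (bv n k) m‖)]
    _ = ∑ k, nsq (SL g e (bv n k)) := by
        simp only [Finset.sum_add_distrib]
        rw [Finset.sum_comm]
        rw [← Finset.sum_add_distrib]
        refine Finset.sum_congr rfl fun k _ => ?_
        rw [← Finset.mul_sum, nsq]; ring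
    _ ≤ ∑ _k : Fin n, β ^ 2 := Finset.sum_le_sum fun k _ => SL_unit hs hβ hb he (nsq_bv k)
    _ = n * β ^ 2 := by simp

theorem SL_diff {n : ℕ} {U : Set (Vn n)} {Γ : Vn n → Bil n} (hU : IsOpen U)
    (hG : DifferentiableOn ℂ Γ U) (e : Vn n) {z : Vn n} (hz : z ∈ U) :
    DifferentiableAt ℂ (fun y => SL (Γ y) e e) z := by
  have h1 := (hG z hz).differentiableAt (hU.mem_nhds hz)
  have h2 := (fderiv_aL hU hG hz e).differentiableAt
  have h3 : DifferentiableAt ℂ (fun y => Γ y e e) z := by fun_prop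
  unfold SL
  exact (h3.sub (h2.smul_const e)).sub (h2.smul_const e)

theorem SL_div {n : ℕ} {Γ : Vn n → Bil n}
    (hG : DifferentiableOn ℂ Γ (B n)) {β : ℝ} (hβ : 0 ≤ β)
    (hb : ∀ z ∈ B n, ∀ v, qB z (SL (Γ z) v v) ≤ β ^ 2 * qB z v ^ 2)
    {e : Vn n} (he : nsq e = 1) (k : Fin n) :
    ‖fderiv ℂ (fun y => SL (Γ y) e e) 0 (bv n k) k‖ ≤ 8 / 3 * β := by
  have hns : ∀ ζ : ℂ, nsq (ζ • bv n k) = ‖ζ‖ ^ 2 := fun ζ => by rw [nsq_smul, nsq_bv, mul_one]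
  have hB : ∀ ζ : ℂ, ‖ζ‖ ≤ 1 / 2 → ζ • bv n k ∈ B n := by
    intro ζ hζ
    show nsq _ < 1
    rw [hns]; nlinarith [norm_nonneg ζ]
  have hdf : ∀ ζ : ℂ, ‖ζ‖ ≤ 1 / 2 → HasDerivAt (fun ζ : ℂ => SL (Γ (ζ • bv n k)) e e k)
      (fderiv ℂ (fun y => SL (Γ y) e e) (ζ • bv n k) (bv n k) k) ζ := by
    intro ζ hζ
    have h1 := (SL_diff (B_open n) hG e (hB ζ hζ)).hasFDerivAt
    have h2 : HasDerivAt (fun ζ : ℂ => ζ • bv n k) (bv n k) ζ := by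
      simpa using (hasDerivAt_id ζ).smul_const (bv n k)
    have h3 := h1.comp_hasDerivAt ζ h2
    exact (hasDerivAt_pi.1 h3) k
  have h0 := (hdf 0 (by simp)).deriv
  rw [zero_smul] at h0
  rw [← h0]
  have := Complex.norm_deriv_le_of_forall_mem_sphere_norm_le (c := 0) (R := 1 / 2) (C := 4 / 3 * β)
    (f := fun ζ : ℂ => SL (Γ (ζ • bv n k)) e e k) (by norm_num) ?_ ?_
  · refine this.trans (le_of_eq (by ring))
  · apply DifferentiableOn.diffContOnCl
    intro ζ hζ
    rw [closure_ball _ (by norm_num)] at hζ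
    exact (hdf ζ (by simpa using hζ)).differentiableAt.differentiableWithinAt
  · intro ζ hζ
    have hζ : ‖ζ‖ = 1 / 2 := by simpa using hζ
    have h := hb _ (hB ζ hζ.le) e
    set X := SL (Γ (ζ • bv n k)) e e
    have i1 : ∀ u : Vn n, ‖ip u (ζ • bv n k)‖ ^ 2 = 1 / 4 * ‖u k‖ ^ 2 := by
      intro u
      rw [ip_smul_right, ip_bv, norm_mul, mul_pow, RCLike.norm_conj, hζ]; norm_num
    have i2 := nsq_coord X k
    have i3 := nsq_coord e k
    simp only [qB, hns, i1, hζ, he] at h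
    have h5 : (4 / 3 * ‖X k‖) ^ 2 ≤ (β * (16 / 9)) ^ 2 := by
      calc (4 / 3 * ‖X k‖) ^ 2 ≤ (nsq X * (1 - (1 / 2) ^ 2) + 1 / 4 * ‖X k‖ ^ 2) / (1 - (1 / 2) ^ 2) ^ 2 := by
            norm_num; nlinarith
        _ ≤ _ := h
        _ = (β * ((1 * (1 - (1 / 2) ^ 2) + 1 / 4 * ‖e k‖ ^ 2) / (1 - (1 / 2) ^ 2) ^ 2)) ^ 2 := by ring
        _ ≤ _ := by
            apply pow_le_pow_left₀ (by positivity)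
            apply mul_le_mul_of_nonneg_left _ hβ
            norm_num
            nlinarith
    have h6 := (pow_le_pow_iff_left₀ (by positivity) (by positivity) two_ne_zero).1 h5
    show ‖X k‖ ≤ _
    linarith

theorem core {n : ℕ} {M : Vn n → Vn n →L[ℂ] Vn n} {Γ : Vn n → Bil n}
    (h : IsFrame n (B n) M Γ) (hn : 2 ≤ n) {β : ℝ} (hβ : 0 ≤ β)
    (hb : ∀ z ∈ B n, ∀ v, qB z (SL (Γ z) v v) ≤ β ^ 2 * qB z v ^ 2)
    {e : Vn n} (he : nsq e = 1) {A : ℝ} (hA : 0 ≤ A) (ha : aL (Γ 0) e = A)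
    (hmax : ∀ v, ‖aL (Γ 0) v‖ ^ 2 ≤ A ^ 2 * nsq v)
    (hd : (fderiv ℂ (fun y => aL (Γ y) e) 0 e).re ≤ 1) :
    ((n : ℝ) - 1) * A ^ 2 ≤ ((n : ℝ) - 1) * (1 + β * A) + (8 / 3 * n * β + n * β ^ 2) := by
  have h0 : (0 : Vn n) ∈ B n := by simp [B, nsq]
  have hb0 : ∀ v, nsq (SL (Γ 0) v v) ≤ β ^ 2 * nsq v ^ 2 := by
    intro v; have := hb 0 h0 v; rwa [qB_zero, qB_zero] at this
  have hid := congrArg Complex.re (h.ident (B_open n) h0 e)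
  have hn1 : (0 : ℝ) ≤ (n : ℝ) - 1 := by
    have : (2 : ℝ) ≤ n := by exact_mod_cast hn
    linarith
  have hc : ((n : ℂ) - 1) = (((n : ℝ) - 1 : ℝ) : ℂ) := by push_cast; rfl
  rw [ha, hc] at hid
  simp only [Complex.sub_re, Complex.add_re, Complex.re_ofReal_mul, ← Complex.ofReal_pow, Complex.ofReal_re] at hid
  have t1 : ‖aL (Γ 0) (SL (Γ 0) e e)‖ ≤ A * β := by
    apply abs_le_of_sq_le_sq' _ (by positivity) |>.2
    have := hb0 e
    rw [he] at this
    nlinarith [hmax (SL (Γ 0) e e), sq_nonneg A]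
  have t2 := SL_tr (h.symm 0 h0) hβ hb0 he
  have t3 : ‖∑ k, fderiv ℂ (fun y => SL (Γ y) e e) 0 (bv n k) k‖ ≤ 8 / 3 * n * β := by
    calc _ ≤ ∑ k, ‖fderiv ℂ (fun y => SL (Γ y) e e) 0 (bv n k) k‖ := norm_sum_le _ _
      _ ≤ ∑ _k : Fin n, 8 / 3 * β := Finset.sum_le_sum fun k _ => SL_div h.diffG hβ hb he k
      _ = _ := by simp; ring
  have u1 := (abs_le.1 ((Complex.abs_re_le_norm _).trans t1)).1
  have u2 := (abs_le.1 ((Complex.abs_re_le_norm _).trans t2)).2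
  have u3 := (abs_le.1 ((Complex.abs_re_le_norm _).trans t3)).1
  have v1 := mul_le_mul_of_nonneg_left hd hn1
  have v2 := mul_le_mul_of_nonneg_left u1 hn1
  linarith
end Part5

section Part6
open scoped BigOperators ComplexConjugate

/-- differential at the origin of the automorphism, extended up to the boundary -/
def Ds {n : ℕ} (c v : Vn n) : Vn n :=
  ((Real.sqrt (1 - nsq c) : ℝ) : ℂ) • v -
    ((((Real.sqrt (1 - nsq c)) / (1 + Real.sqrt (1 - nsq c)) : ℝ) : ℂ) * ip v c) • c

def Nf {n : ℕ} (Γ : Vn n → Bil n) (r : ℝ) (p : Vn n × Vn n) : ℝ :=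
  ‖(r : ℂ) * aL (Γ ((r : ℂ) • p.1)) (Ds p.1 p.2) - ip p.2 p.1‖

theorem ip_continuous {n : ℕ} : Continuous (fun p : Vn n × Vn n => ip p.2 p.1) := by
  unfold ip
  fun_prop

theorem Ds_continuous {n : ℕ} : Continuous (fun p : Vn n × Vn n => Ds p.1 p.2) := by
  unfold Ds
  have h1 : Continuous (fun p : Vn n × Vn n => nsq p.1) := nsq_continuous.comp continuous_fst
  have h2 := ip_continuous (n := n)
  have h3 : Continuous (fun p : Vn n × Vn n => Real.sqrt (1 - nsq p.1)) := by fun_prop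
  have h4 : Continuous (fun p : Vn n × Vn n => Real.sqrt (1 - nsq p.1) / (1 + Real.sqrt (1 - nsq p.1))) := by
    refine h3.div (by fun_prop) fun p => ?_
    have := Real.sqrt_nonneg (1 - nsq p.1)
    positivity
  exact ((Complex.continuous_ofReal.comp h3).smul continuous_snd).sub
    (((Complex.continuous_ofReal.comp h4).mul h2).smul continuous_fst)

def Kset (n : ℕ) : Set (Vn n × Vn n) := {p | nsq p.1 ≤ 1 ∧ nsq p.2 = 1}

theorem Kset_compact (n : ℕ) : IsCompact (Kset n) := by
  have hcl : IsClosed (Kset n) :=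
    (isClosed_le (nsq_continuous.comp continuous_fst) continuous_const).inter
      (isClosed_eq (nsq_continuous.comp continuous_snd) continuous_const)
  refine Metric.isCompact_of_isClosed_isBounded hcl ?_
  refine (Metric.isBounded_closedBall (x := (0 : Vn n × Vn n)) (r := 1)).subset ?_
  have hh : ∀ x : Vn n, nsq x ≤ 1 → ‖x‖ ≤ 1 := by
    intro x hx
    rw [pi_norm_le_iff_of_nonneg zero_le_one]
    intro k
    have := nsq_coord x k
    nlinarith [norm_nonneg (x k)]
  rintro ⟨c, v⟩ ⟨h1, h2⟩
  rw [mem_closedBall_zero_iff, Prod.norm_def]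
  exact max_le (hh _ h1) (hh _ h2.le)

theorem Nf_cont {n : ℕ} {Γ : Vn n → Bil n} (hG : DifferentiableOn ℂ Γ (B n)) {r : ℝ}
    (hr0 : 0 < r) (hr1 : r < 1) : ContinuousOn (Nf Γ r) (Kset n) := by
  have h1 : ContinuousOn (fun p : Vn n × Vn n => Γ ((r : ℂ) • p.1)) (Kset n) := by
    refine hG.continuousOn.comp (by fun_prop) ?_
    rintro ⟨c, v⟩ ⟨h1, h2⟩
    exact r_ball hr0 hr1 h1
  have h2 : ContinuousOn (fun p : Vn n × Vn n => aL (Γ ((r : ℂ) • p.1)) (Ds p.1 p.2)) (Kset n) := by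
    simp only [aL_apply]
    refine continuousOn_const.mul (continuousOn_finsetSum _ fun k _ => ?_)
    have h3 : ContinuousOn (fun p : Vn n × Vn n => Γ ((r : ℂ) • p.1) (Ds p.1 p.2) (bv n k)) (Kset n) :=
      (h1.clm_apply Ds_continuous.continuousOn).clm_apply continuousOn_const
    exact (continuous_apply k).comp_continuousOn h3
  unfold Nf
  exact ((continuousOn_const.mul h2).sub ip_continuous.continuousOn).norm

theorem Ds_surj {n : ℕ} {c : Vn n} (hc : nsq c < 1) (w : Vn n) :
    ∃ v, Ds c v = w ∧ ip v c = ip w c / (1 - ip c c) ∧ nsq v = qB c w := by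
  obtain ⟨s, hs, hs2, hsq⟩ : ∃ s : ℝ, 0 < s ∧ s ^ 2 = 1 - nsq c ∧ s = Real.sqrt (1 - nsq c) :=
    ⟨_, Real.sqrt_pos.2 (by linarith), Real.sq_sqrt (by linarith), rfl⟩
  have hs0 : (s : ℂ) ≠ 0 := by exact_mod_cast hs.ne'
  have h1 := s_ne hs
  have hcc := sC hs2
  have hip : ip ((s : ℂ)⁻¹ • w + (ip w c / (s ^ 2 * (1 + s))) • c) c = ip w c / (1 - ip c c) := by
    rw [ip_add_left, ip_smul_left, ip_smul_left, hcc]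
    field_simp
    ring
  refine ⟨(s : ℂ)⁻¹ • w + (ip w c / (s ^ 2 * (1 + s))) • c, ?_, hip, ?_⟩
  · rw [Ds, hip, ← hsq, hcc]
    ext j
    simp only [Pi.sub_apply, Pi.add_apply, Pi.smul_apply, smul_eq_mul]
    push_cast
    field_simp
    ring
  · have : ((nsq ((s : ℂ)⁻¹ • w + (ip w c / (s ^ 2 * (1 + s))) • c) : ℝ) : ℂ) = ((qB c w : ℝ) : ℂ) := by
      rw [qB_cast, ← ip_self]
      simp only [ip_add_left, ip_add_right, ip_smul_left, ip_smul_right, map_mul, map_inv₀, map_div₀, map_pow,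
        map_add, map_one, Complex.conj_ofReal, ip_conj, hcc]
      field_simp
      ring
    exact_mod_cast this

theorem N_hom {n : ℕ} {Γ : Vn n → Bil n} {r A : ℝ}
    (hA : ∀ p ∈ Kset n, Nf Γ r p ≤ A) {c : Vn n} (hc : nsq c ≤ 1) (v : Vn n) :
    Nf Γ r (c, v) ^ 2 ≤ A ^ 2 * nsq v := by
  by_cases hv : nsq v = 0
  · have := nsq_eq_zero hv
    subst this
    simp [Nf, Ds, ip, hv]
  · have hpos : 0 < nsq v := lt_of_le_of_ne (nsq_nonneg v) (Ne.symm hv)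
    obtain ⟨t, ht, ht2⟩ : ∃ t : ℝ, 0 < t ∧ t ^ 2 = nsq v := ⟨_, Real.sqrt_pos.2 hpos, Real.sq_sqrt hpos.le⟩
    have htc : (t : ℂ) ≠ 0 := by exact_mod_cast ht.ne'
    have h1 := hA (c, ((t⁻¹ : ℝ) : ℂ) • v) ⟨hc, by
      show nsq _ = 1
      rw [nsq_smul, ← ht2]
      simp
      field_simp⟩
    have h2 : Nf Γ r (c, ((t⁻¹ : ℝ) : ℂ) • v) = t⁻¹ * Nf Γ r (c, v) := by
      have hD : Ds c (((t⁻¹ : ℝ) : ℂ) • v) = ((t⁻¹ : ℝ) : ℂ) • Ds c v := by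
        simp only [Ds, ip_smul_left, smul_sub, smul_smul]
        congr 2 <;> ring
      have e : (r : ℂ) * (((t⁻¹ : ℝ) : ℂ) * aL (Γ ((r : ℂ) • c)) (Ds c v)) - ((t⁻¹ : ℝ) : ℂ) * ip v c
          = ((t⁻¹ : ℝ) : ℂ) * ((r : ℂ) * aL (Γ ((r : ℂ) • c)) (Ds c v) - ip v c) := by ring
      simp only [Nf, hD, map_smul, smul_eq_mul, ip_smul_left]
      rw [e, norm_mul, Complex.norm_real, Real.norm_of_nonneg (by positivity)]
    rw [h2] at h1
    have h3 : Nf Γ r (c, v) ≤ A * t := by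
      have := mul_le_mul_of_nonneg_right h1 ht.le
      field_simp at this
      linarith
    have h4 : 0 ≤ Nf Γ r (c, v) := norm_nonneg _
    rw [← ht2, ← mul_pow]
    exact pow_le_pow_left₀ h4 h3 2

theorem N_inv {n : ℕ} {M : Vn n → Vn n →L[ℂ] Vn n} {Γ : Vn n → Bil n}
    (h : IsFrame n (B n) M Γ) {r A s : ℝ} {c : Vn n} (hr0 : 0 < r) (hr1 : r < 1) (hs : 0 < s)
    (hs2 : s ^ 2 = 1 - nsq c)
    (hA : ∀ p ∈ Kset n, Nf Γ r p ≤ A) {z : Vn n} (hz : z ∈ B n) (v : Vn n) :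
    ‖aL (GM (Mt M r c s) z) v - ip v z / (1 - ip z z)‖ ^ 2 ≤ A ^ 2 * qB z v := by
  have hy := sig_ball hs hs2 hz
  obtain ⟨u, hu1, hu2, hu3⟩ := Ds_surj hy (Tm c s z v)
  have h1 := N_hom hA hy.le u
  rw [hu3, qB_inv hs hs2 hz] at h1
  have e : aL (GM (Mt M r c s) z) v - ip v z / (1 - ip z z) =
      (r : ℂ) * aL (Γ ((r : ℂ) • sig c s z)) (Tm c s z v)
        - ip (Tm c s z v) (sig c s z) / (1 - ip (sig c s z) (sig c s z)) := by
    rw [aL_t h hr0 hr1 hs hs2 hz, sig_form hs hs2 hz]; ring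
  rw [e, ← hu2]
  simpa only [Nf, hu1] using h1

theorem max_arg {n : ℕ} {M : Vn n → Vn n →L[ℂ] Vn n} {Γ : Vn n → Bil n}
    (h : IsFrame n (B n) M Γ) (hn : 2 ≤ n) {β : ℝ} (hβ : 0 ≤ β)
    (hb : ∀ z ∈ B n, ∀ v, qB z (SL (Γ z) v v) ≤ β ^ 2 * qB z v ^ 2) {r : ℝ} (hr0 : 0 < r) (hr1 : r < 1) :
    ∃ A : ℝ, 0 ≤ A ∧ (A ≤ 1 ∨
      ((n : ℝ) - 1) * A ^ 2 ≤ ((n : ℝ) - 1) * (1 + β * A) + (8 / 3 * n * β + n * β ^ 2)) ∧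
      ∀ v, nsq v = 1 → r * ‖aL (Γ 0) v‖ ≤ A := by
  have hne : (Kset n).Nonempty := ⟨(0, bv n ⟨0, by omega⟩), ⟨by simp [nsq], nsq_bv _⟩⟩
  obtain ⟨⟨c, e0⟩, ⟨hc, he0⟩, hmax⟩ := (Kset_compact n).exists_isMaxOn hne (Nf_cont h.diffG hr0 hr1)
  simp only at hc he0
  have hA : ∀ p ∈ Kset n, Nf Γ r p ≤ Nf Γ r (c, e0) := fun p hp => hmax hp
  set A := Nf Γ r (c, e0) with hAdef
  have hA0 : 0 ≤ A := norm_nonneg _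
  refine ⟨A, hA0, ?_, ?_⟩
  · rcases hc.eq_or_lt with hc1 | hc1
    · left
      have : A = ‖ip e0 c‖ := by
        rw [hAdef]
        simp [Nf, Ds, hc1]
      rw [this]
      have := ip_cs e0 c
      rw [he0, hc1] at this
      nlinarith [norm_nonneg (ip e0 c)]
    · right
      obtain ⟨s, hs, hs2, hsq⟩ : ∃ s : ℝ, 0 < s ∧ s ^ 2 = 1 - nsq c ∧ s = Real.sqrt (1 - nsq c) :=
        ⟨_, Real.sqrt_pos.2 (by linarith), Real.sq_sqrt (by linarith), rfl⟩
      have h0 : (0 : Vn n) ∈ B n := by simp [B, nsq]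
      have hval : aL (GM (Mt M r c s) 0) e0 =
          (r : ℂ) * aL (Γ ((r : ℂ) • c)) (Ds c e0) - ip e0 c := by
        have d0 : den c 0 = 1 := by simp [den, ip]
        have s0 : sig c s 0 = c := by simp [sig, d0]
        have hT : Tm c s 0 e0 = Ds c e0 := by
          rw [Tm_apply, d0, s0, Lc_apply, Ds, ← hsq]
          have := s_ne hs
          ext j
          simp only [Pi.sub_apply, Pi.add_apply, Pi.smul_apply, smul_eq_mul]
          push_cast
          field_simp
          ring
        rw [aL_t h hr0 hr1 hs hs2 h0, d0, s0, hT, div_one]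
      obtain ⟨u, hu, hu2⟩ := RCLike.exists_norm_eq_mul_self (aL (GM (Mt M r c s) 0) e0)
      set G := GM (Mt M r c s) with hG
      have hF := Mt_frame h hr0 hr1 hs hs2
      have hinv := fun {z : Vn n} (hz : z ∈ B n) v => N_inv h hr0 hr1 hs hs2 hA hz v
      have he : nsq (u • e0) = 1 := by rw [nsq_smul, hu, he0]; norm_num
      have ha : aL (G 0) (u • e0) = A := by
        rw [map_smul, smul_eq_mul, ← hu2, hval]; rfl
      refine core hF hn hβ (fun z hz v => SL_t_bound h hr0 hr1 hs hs2 hb hz v) he hA0 ha ?_ ?_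
      · intro v
        have := hinv h0 v
        rw [qB_zero] at this
        simpa [ip] using this
      · set e := u • e0
        have hd1 : HasDerivAt (fun ζ : ℂ => aL (G (ζ • e)) e) (fderiv ℂ (fun y => aL (G y) e) 0 e) 0 := by
          have h1 := (fderiv_aL (B_open n) hF.diffG h0 e).differentiableAt.hasFDerivAt
          have h2 : HasDerivAt (fun ζ : ℂ => ζ • e) e 0 := by
            simpa using (hasDerivAt_id (0 : ℂ)).smul_const e
          have h3 : HasFDerivAt (fun y => aL (G y) e) (fderiv ℂ (fun y => aL (G y) e) 0) ((0 : ℂ) • e) := by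
            rw [zero_smul]; exact h1
          exact h3.comp_hasDerivAt 0 h2
        have hd2 : HasDerivAt (fun ζ : ℂ => (1 - ζ ^ 2) * aL (G (ζ • e)) e - ζ)
            (fderiv ℂ (fun y => aL (G y) e) 0 e - 1) ((0 : ℝ) : ℂ) := by
          have h1 : HasDerivAt (fun ζ : ℂ => 1 - ζ ^ 2) 0 0 := by
            simpa using (hasDerivAt_pow 2 (0 : ℂ)).const_sub 1
          have := (h1.mul hd1).sub (hasDerivAt_id (0 : ℂ))
          simp only [zero_mul, zero_add, zero_pow two_ne_zero, ne_eq, OfNat.ofNat_ne_zero, not_false_eq_true, sub_zero, one_mul] at this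
          rw [Complex.ofReal_zero]
          exact this
        have hd3 := hd2.real_of_complex
        have hloc : IsLocalMax (fun t : ℝ => ((1 - (t : ℂ) ^ 2) * aL (G ((t : ℂ) • e)) e - t).re) 0 := by
          have hn : Set.Ioo (-1 : ℝ) 1 ∈ nhds (0 : ℝ) := Ioo_mem_nhds (by norm_num) (by norm_num)
          filter_upwards [hn] with t ht
          have e0 : ((1 - ((0 : ℝ) : ℂ) ^ 2) * aL (G (((0 : ℝ) : ℂ) • e)) e - ((0 : ℝ) : ℂ)).re = A := by
            simp [ha]
          rw [e0]
          have ht2 : t ^ 2 < 1 := by nlinarith [ht.1, ht.2]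
          have hnq : nsq ((t : ℂ) • e) = t ^ 2 := by rw [nsq_smul, he]; simp
          have hz : (t : ℂ) • e ∈ B n := by show nsq _ < 1; rw [hnq]; exact ht2
          have hie : ip e ((t : ℂ) • e) = t := by
            rw [ip_smul_right, ip_self, he]; simp
          have hk := hinv hz e
          have hP : (0 : ℝ) < 1 - t ^ 2 := by linarith
          have hPc : (1 - (t : ℂ) ^ 2) ≠ 0 := by exact_mod_cast hP.ne'
          have hqv : qB ((t : ℂ) • e) e = (1 / (1 - t ^ 2)) ^ 2 := by
            rw [qB, hnq, hie, he]; simp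
          rw [hqv, hie, ip_self, hnq, ← mul_pow] at hk
          have hk2 := (pow_le_pow_iff_left₀ (norm_nonneg _) (by positivity) two_ne_zero).1 hk
          refine (Complex.re_le_norm _).trans ?_
          have e1 : (1 - (t : ℂ) ^ 2) * aL (G ((t : ℂ) • e)) e - t =
              ((1 - t ^ 2 : ℝ) : ℂ) * (aL (G ((t : ℂ) • e)) e - t / (1 - ((t ^ 2 : ℝ) : ℂ))) := by
            push_cast
            field_simp
          rw [e1, norm_mul, Complex.norm_real, Real.norm_of_nonneg hP.le]
          calc _ ≤ (1 - t ^ 2) * (A * (1 / (1 - t ^ 2))) := mul_le_mul_of_nonneg_left hk2 hP.le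
            _ = A := by field_simp
        have := hloc.hasDerivAt_eq_zero hd3
        rw [Complex.sub_re, Complex.one_re] at this
        linarith
  · intro v hv
    have := hA (0, v) ⟨by simp [nsq], hv⟩
    simpa [Nf, Ds, ip, nsq, abs_of_pos hr0] using this

theorem a_bound {n : ℕ} {M : Vn n → Vn n →L[ℂ] Vn n} {Γ : Vn n → Bil n}
    (h : IsFrame n (B n) M Γ) (hn : 2 ≤ n) {β C : ℝ} (hβ : 0 ≤ β)
    (hb : ∀ z ∈ B n, ∀ v, qB z (SL (Γ z) v v) ≤ β ^ 2 * qB z v ^ 2)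
    (hC : 8 / 3 * n * β + n * β ^ 2 ≤ ((n : ℝ) - 1) * C) {v : Vn n} (hv : nsq v = 1) :
    ‖aL (Γ 0) v‖ ≤ β / 2 + Real.sqrt (1 + β ^ 2 / 4 + C) := by
  have hn1 : (0 : ℝ) < (n : ℝ) - 1 := by
    have : (2 : ℝ) ≤ n := by exact_mod_cast hn
    linarith
  have hC0 : 0 ≤ C := by
    have : 0 ≤ ((n : ℝ) - 1) * C := le_trans (by positivity) hC
    exact nonneg_of_mul_nonneg_right this hn1
  have key : ∀ r : ℝ, 0 < r → r < 1 → r * ‖aL (Γ 0) v‖ ≤ β / 2 + Real.sqrt (1 + β ^ 2 / 4 + C) := by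
    intro r hr0 hr1
    obtain ⟨A, hA0, hA, hA2⟩ := max_arg h hn hβ hb hr0 hr1
    refine (hA2 v hv).trans ?_
    rcases hA with h1 | h1
    · have : 1 ≤ Real.sqrt (1 + β ^ 2 / 4 + C) := by
        apply Real.le_sqrt_of_sq_le
        nlinarith
      linarith
    · have h2 : A ^ 2 ≤ 1 + β * A + C := by
        have : ((n : ℝ) - 1) * A ^ 2 ≤ ((n : ℝ) - 1) * (1 + β * A + C) := by linarith
        exact le_of_mul_le_mul_left this hn1
      have : A - β / 2 ≤ Real.sqrt (1 + β ^ 2 / 4 + C) := by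
        apply Real.le_sqrt_of_sq_le
        nlinarith
      linarith
  have ht : Filter.Tendsto (fun r : ℝ => r * ‖aL (Γ 0) v‖) (nhdsWithin 1 (Set.Iio 1)) (nhds (1 * ‖aL (Γ 0) v‖)) :=
    (Filter.tendsto_id.mono_left nhdsWithin_le_nhds).mul_const _
  rw [one_mul] at ht
  refine le_of_tendsto ht ?_
  have : Set.Ioo (0 : ℝ) 1 ∈ nhdsWithin (1 : ℝ) (Set.Iio 1) := Ioo_mem_nhdsLT (by norm_num)
  filter_upwards [this] with r hr
  exact key r hr.1 hr.2
end Part6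

section Part7
open scoped BigOperators ComplexConjugate

theorem eucl_nsq {n : ℕ} (v : Vn n) : euclNorm n v = Real.sqrt (nsq v) := rfl

theorem eball_eq (n : ℕ) : eball n = B n := by
  ext z
  show euclNorm n z < 1 ↔ nsq z < 1
  rw [eucl_nsq, Real.sqrt_lt' one_pos, one_pow]

theorem berg_eq {n : ℕ} {z : Vn n} (v : Vn n) :
    bergSq n z v = ((n : ℝ) + 1) * qB z v := by
  have he : euclNorm n z ^ 2 = nsq z := by rw [eucl_nsq, Real.sq_sqrt (nsq_nonneg z)]
  rw [bergSq, he]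
  have : (∑ i, ∑ j, (((n : ℂ) + 1) / (((1 - nsq z : ℝ) : ℂ)) ^ 2) *
      ((if i = j then ((1 - nsq z : ℝ) : ℂ) else 0)
        + (starRingEnd ℂ) (z i) * z j) * v i * (starRingEnd ℂ) (v j)) =
      ((((n : ℝ) + 1) * qB z v : ℝ) : ℂ) := by
    have h1 : ∀ i j, (((n : ℂ) + 1) / (((1 - nsq z : ℝ) : ℂ)) ^ 2) *
      ((if i = j then ((1 - nsq z : ℝ) : ℂ) else 0)
        + (starRingEnd ℂ) (z i) * z j) * v i * (starRingEnd ℂ) (v j) =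
        (((n : ℂ) + 1) / (((1 - nsq z : ℝ) : ℂ)) ^ 2) *
        ((if i = j then ((1 - nsq z : ℝ) : ℂ) * (v i * conj (v j)) else 0) +
        (v i * conj (z i)) * (z j * conj (v j))) := by
      intro i j; split_ifs <;> ring
    simp only [h1, ← Finset.mul_sum, Finset.sum_add_distrib, Finset.sum_ite_eq, Finset.mem_univ, if_true]
    rw [← Finset.sum_mul]
    push_cast
    rw [qB_cast, ip_self z]
    change _ * ((1 - (nsq z : ℂ)) * ip v v + ip v z * ip z v) = _
    ring
  rw [this, Complex.ofReal_re]

def dt {n : ℕ} (A : Vn n →L[ℂ] Vn n) : ℂ := Matrix.det (Matrix.of fun i j => A (bv n j) i)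

theorem dt_diff {n : ℕ} (A : Vn n →L[ℂ] Vn n) : DifferentiableAt ℂ (dt (n := n)) A := by
  unfold dt
  simp only [Matrix.det_apply, Matrix.of_apply]
  fun_prop

theorem mat_mulVec {n : ℕ} (A : Vn n →L[ℂ] Vn n) (v : Vn n) :
    (Matrix.of fun i j => A (bv n j) i).mulVec v = A v := by
  ext i
  have := sum_bv ((ContinuousLinearMap.proj i : Vn n →L[ℂ] ℂ).comp A) v
  simpa [Matrix.mulVec, dotProduct] using this

theorem dt_fderiv {n : ℕ} (A X : Vn n →L[ℂ] Vn n) :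
    fderiv ℂ (dt (n := n)) A (A.comp X) = dt A * ∑ k, X (bv n k) k := by
  have h1 : HasDerivAt (fun ζ : ℂ => dt (A + ζ • A.comp X)) (fderiv ℂ (dt (n := n)) A (A.comp X)) 0 := by
    have h2 : HasDerivAt (fun ζ : ℂ => A + ζ • A.comp X) (A.comp X) 0 := by
      simpa using ((hasDerivAt_id (0 : ℂ)).smul_const (A.comp X)).const_add A
    have h3 : HasFDerivAt (dt (n := n)) (fderiv ℂ (dt (n := n)) A) (A + (0 : ℂ) • A.comp X) := by
      have e0 : A + (0 : ℂ) • A.comp X = A := by ext; simp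
      rw [e0]; exact (dt_diff A).hasFDerivAt
    exact h3.comp_hasDerivAt 0 h2
  have e : ∀ ζ : ℂ, dt (A + ζ • A.comp X) = dt A * Matrix.det (1 + ζ • (Matrix.of fun i j => X (bv n j) i)) := by
    intro ζ
    rw [dt, dt, ← Matrix.det_mul]
    congr 1
    rw [mul_add, mul_one, mul_smul_comm]
    ext i j
    have := congrFun (mat_mulVec A (X (bv n j))) i
    simp only [Matrix.of_apply, add_apply, smul_apply, Pi.add_apply, Pi.smul_apply, Matrix.add_apply, Matrix.smul_apply,
      ContinuousLinearMap.comp_apply]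
    rw [← this]
    rfl
  rw [funext fun ζ => (e ζ).trans (congrArg _ (Matrix.det_one_add_smul ζ _))] at h1
  have h2 := ((((hasDerivAt_id (0 : ℂ)).const_mul (Matrix.trace (Matrix.of fun i j => X (bv n j) i))).const_add 1).add
    (((Polynomial.differentiable (Matrix.det (1 + (Polynomial.X : Polynomial ℂ) • (Matrix.of fun i j => X (bv n j) i).map Polynomial.C)).divX.divX 0).hasDerivAt).mul
      (hasDerivAt_pow 2 (0 : ℂ)))).const_mul (dt A)
  have h3 := h1.unique h2
  rw [h3]
  simp [Matrix.trace]

section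
variable {n : ℕ} {F : Vn n → Vn n}

theorem pd_comp (hF : DifferentiableOn ℂ F (B n)) {z : Vn n} (hz : z ∈ B n) (i j : Fin n) :
    pd n j (fun w => F w i) z = fderiv ℂ F z (bv n j) i := by
  have h := ((hF z hz).differentiableAt ((B_open n).mem_nhds hz)).hasFDerivAt
  have h2 := (hasFDerivAt_pi'.1 h) i
  rw [pd, h2.fderiv]
  rfl

theorem Jac_eq (hF : DifferentiableOn ℂ F (B n)) {z : Vn n} (hz : z ∈ B n) :
    Jac n F z = Matrix.of fun i j => fderiv ℂ F z (bv n j) i := by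
  ext i j
  exact pd_comp hF hz i j

theorem pd2_eq (hF : DifferentiableOn ℂ F (B n)) {z : Vn n} (hz : z ∈ B n) (i j l : Fin n) :
    pd2 n i j (fun w => F w l) z = fderiv ℂ (fderiv ℂ F) z (bv n i) (bv n j) l := by
  have h1 : (fun w => pd n j (fun w => F w l) w) =ᶠ[nhds z] fun w => fderiv ℂ F w (bv n j) l := by
    filter_upwards [(B_open n).mem_nhds hz] with w hw
    exact pd_comp hF hw l j
  have h2 := ((holo_fderiv (B_open n) hF z hz).differentiableAt ((B_open n).mem_nhds hz)).hasFDerivAt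
  have h3 := (hasFDerivAt_pi'.1 (h2.clm_apply (hasFDerivAt_const (bv n j) z))) l
  rw [pd2, pd, h1.fderiv_eq, h3.fderiv]
  simp [bv]

theorem JDet_deriv (hF : DifferentiableOn ℂ F (B n)) {z : Vn n} (hz : z ∈ B n)
    (hinj : ∀ v, fderiv ℂ F z v = 0 → v = 0) (j : Fin n) :
    pd n j (JDet n F) z = JDet n F z * (((n : ℂ) + 1) * aL (GM (fderiv ℂ F) z) (bv n j)) := by
  have h1 : JDet n F =ᶠ[nhds z] fun w => dt (fderiv ℂ F w) := by
    filter_upwards [(B_open n).mem_nhds hz] with w hw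
    rw [JDet, Jac_eq hF hw]; rfl
  have h2 := ((holo_fderiv (B_open n) hF z hz).differentiableAt ((B_open n).mem_nhds hz)).hasFDerivAt
  have h3 := (dt_diff (fderiv ℂ F z)).hasFDerivAt.comp z h2
  have h4 : fderiv ℂ (fderiv ℂ F) z (bv n j) = (fderiv ℂ F z).comp (GM (fderiv ℂ F) z (bv n j)) := by
    ext1 w
    exact (GM_spec hinj _ w).symm
  have h0 : ((n : ℂ) + 1) ≠ 0 := by exact_mod_cast Nat.succ_ne_zero n
  rw [pd, h1.fderiv_eq, show (fun w => dt (fderiv ℂ F w)) = dt ∘ fderiv ℂ F from rfl, h3.fderiv, ContinuousLinearMap.comp_apply]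
  rw [show (Pi.single j 1 : Vn n) = bv n j from rfl, h4, dt_fderiv, aL_apply, h1.eq_of_nhds]
  field_simp

theorem SL_sum (g : Bil n) (v : Vn n) (k : Fin n) :
    ∑ i, ∑ j, v i * SL g (bv n i) (bv n j) k * v j = SL g v v k := by
  have h1 : ∀ i, ∑ j, v i * SL g (bv n i) (bv n j) k * v j = SL g (bv n i) v k * v i := by
    intro i
    have := sum_bv ((ContinuousLinearMap.proj k : Vn n →L[ℂ] ℂ).comp (SLm g (bv n i))) v
    simp only [ContinuousLinearMap.comp_apply, SLm_apply, ContinuousLinearMap.proj_apply] at this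
    rw [← this, Finset.sum_mul]
    exact Finset.sum_congr rfl fun j _ => by ring
  simp only [h1]
  have hl : ∀ w, SL g w v k = ((ContinuousLinearMap.proj k : Vn n →L[ℂ] ℂ).comp
      (g.flip v - (aL g).smulRight v - aL g v • ContinuousLinearMap.id ℂ (Vn n))) w := by
    intro w; simp [SL]
  simp only [hl]
  exact sum_bv _ v

theorem Schw_eq (hF : DifferentiableOn ℂ F (B n)) {z : Vn n} (hz : z ∈ B n) (hJ : JDet n F z ≠ 0)
    (hinj : ∀ v, fderiv ℂ F z v = 0 → v = 0) (v : Vn n) :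
    SchwOp n F z v = SL (GM (fderiv ℂ F) z) v v := by
  have h0 : ((n : ℂ) + 1) ≠ 0 := by exact_mod_cast Nat.succ_ne_zero n
  have hos : ∀ i j k, oSchw n F i j k z = SL (GM (fderiv ℂ F) z) (bv n i) (bv n j) k := by
    intro i j k
    have h1 : ∑ l, pd2 n i j (fun w => F w l) z * (Jac n F z)⁻¹ k l = GM (fderiv ℂ F) z (bv n i) (bv n j) k := by
      have h2 : (Jac n F z)⁻¹.mulVec ((Jac n F z).mulVec (GM (fderiv ℂ F) z (bv n i) (bv n j))) =
          GM (fderiv ℂ F) z (bv n i) (bv n j) := by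
        rw [Matrix.mulVec_mulVec, Matrix.nonsing_inv_mul _ (isUnit_iff_ne_zero.2 hJ), Matrix.one_mulVec]
      rw [← congrFun h2 k]
      rw [show (Jac n F z).mulVec (GM (fderiv ℂ F) z (bv n i) (bv n j)) = fderiv ℂ (fderiv ℂ F) z (bv n i) (bv n j) by
        rw [Jac_eq hF hz, mat_mulVec, GM_spec hinj]]
      simp only [Matrix.mulVec, dotProduct, pd2_eq hF hz]
      exact Finset.sum_congr rfl fun l _ => mul_comm _ _
    rw [oSchw, h1, JDet_deriv hF hz hinj, JDet_deriv hF hz hinj, mul_div_cancel_left₀ _ hJ, mul_div_cancel_left₀ _ hJ]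
    simp only [SL, Pi.sub_apply, Pi.smul_apply, smul_eq_mul, bv, Pi.single_apply]
    field_simp
    ring
  ext k
  simp only [SchwOp, hos]
  exact SL_sum _ v k

theorem memF_frame {α : ℝ} (h : memF n α F) :
    IsFrame n (B n) (fderiv ℂ F) (GM (fderiv ℂ F)) := by
  obtain ⟨hF, hJ, -, -, -⟩ := h
  rw [eball_eq] at hF hJ
  refine isFrame_GM (B_open n) (holo_fderiv (B_open n) hF) ?_ ?_
  · intro z hz v hv
    have h1 := hJ z hz
    rw [JDet, Jac_eq hF hz] at h1
    exact Matrix.eq_zero_of_mulVec_eq_zero h1 (by rw [mat_mulVec, hv])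
  · intro z hz v w
    refine second_derivative_symmetric_of_eventually (f := F) (f' := fderiv ℂ F) ?_
      ((holo_fderiv (B_open n) hF z hz).differentiableAt ((B_open n).mem_nhds hz)).hasFDerivAt v w
    filter_upwards [(B_open n).mem_nhds hz] with y hy
    exact ((hF y hy).differentiableAt ((B_open n).mem_nhds hy)).hasFDerivAt

theorem qB_smul (z v : Vn n) (t : ℂ) : qB z (t • v) = ‖t‖ ^ 2 * qB z v := by
  rw [qB, qB, nsq_smul, ip_smul_left, norm_mul]; ring

theorem memF_bound {α : ℝ} (hα : 0 ≤ α) (h : memF n α F) :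
    ∀ z ∈ B n, ∀ v, qB z (SL (GM (fderiv ℂ F) z) v v) ≤ (Real.sqrt (n + 1) * α) ^ 2 * qB z v ^ 2 := by
  intro z hz v
  have hfr := memF_frame h
  obtain ⟨hF, hJ, -, -, hS⟩ := h
  rw [eball_eq] at hF hJ hS
  have hn : (0 : ℝ) < (n : ℝ) + 1 := by positivity
  rw [mul_pow, Real.sq_sqrt hn.le]
  set g := GM (fderiv ℂ F) z
  by_cases hv : qB z v = 0
  · have := qB_eq_zero hz hv
    subst this
    simp [SL, qB, nsq, ip]
  · have hpos : 0 < qB z v := lt_of_le_of_ne (qB_nonneg z v hz) (Ne.symm hv)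
    obtain ⟨t, ht, ht2⟩ : ∃ t : ℝ, 0 < t ∧ t ^ 2 = (n + 1) * qB z v :=
      ⟨_, Real.sqrt_pos.2 (by positivity), Real.sq_sqrt (by positivity)⟩
    have h1 := hS z hz (((t⁻¹ : ℝ) : ℂ) • v) (by
      rw [berg_eq, qB_smul]
      simp only [Complex.norm_real, Real.norm_eq_abs, sq_abs]
      rw [mul_left_comm, ← ht2]
      field_simp)
    rw [Schw_eq hF hz (hJ z hz) (hfr.inj z hz)] at h1
    have h2 : SL g (((t⁻¹ : ℝ) : ℂ) • v) (((t⁻¹ : ℝ) : ℂ) • v) = (((t⁻¹ ^ 2 : ℝ)) : ℂ) • SL g v v := by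
      ext j
      simp [SL]
      ring
    rw [h2, Real.sqrt_le_left hα, berg_eq, qB_smul, Complex.norm_real, Real.norm_eq_abs, sq_abs] at h1
    have h3 : t ^ 4 = ((n + 1) * qB z v) ^ 2 := by rw [← ht2]; ring
    have h4 : ((n : ℝ) + 1) * qB z (SL g v v) ≤ α ^ 2 * t ^ 4 := by
      have h5 := mul_le_mul_of_nonneg_right h1 (by positivity : 0 ≤ t ^ 4)
      calc _ = ((n : ℝ) + 1) * ((t⁻¹ ^ 2) ^ 2 * qB z (SL g v v)) * t ^ 4 := by field_simp
        _ ≤ _ := h5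
    rw [h3] at h4
    refine le_of_mul_le_mul_left (h4.trans (le_of_eq ?_)) hn
    ring

theorem final (hn : 2 ≤ n) {α : ℝ} (hα : 0 ≤ α) (hF : memF n α F) (z : Vn n) (hz : euclNorm n z = 1) :
    (1 / 2) * euclNorm n (fun j => ∑ i, ∑ k, pd2 n i k (fun w => F w j) 0 * z i * z k) ≤
      ((n : ℝ) + 1) * α
        + Real.sqrt (1 + (1 / 4) * ((n : ℝ) + 1) * α ^ 2 +
          ((4 * (n : ℝ) ^ 2 + 2 * (n : ℝ) - 2 + ((n : ℝ) + 1) / ((n : ℝ) - 1)) * α ^ 2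
            + (4 * Real.sqrt ((n : ℝ) + 1)
              + 8 * Real.sqrt ((n : ℝ) + 1) / ((n : ℝ) - 1)) * α)) := by
  have hz1 : nsq z = 1 := by
    rw [eucl_nsq, Real.sqrt_eq_one] at hz; exact hz
  have hfr := memF_frame hF
  have hb := memF_bound hα hF
  obtain ⟨hd, hJ, -, hJ0, -⟩ := hF
  rw [eball_eq] at hd hJ
  have h0 : (0 : Vn n) ∈ B n := by simp [B, nsq]
  have hn2 : (2 : ℝ) ≤ n := by exact_mod_cast hn
  have hn1 : (0 : ℝ) < (n : ℝ) - 1 := by linarith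
  set q := Real.sqrt ((n : ℝ) + 1) with hq
  have hq2 : q ^ 2 = n + 1 := Real.sq_sqrt (by positivity)
  have hq0 : 0 ≤ q := Real.sqrt_nonneg _
  set C := (4 * (n : ℝ) ^ 2 + 2 * (n : ℝ) - 2 + ((n : ℝ) + 1) / ((n : ℝ) - 1)) * α ^ 2
            + (4 * q + 8 * q / ((n : ℝ) - 1)) * α with hC
  have hβ : 0 ≤ q * α := by positivity
  have hCb : 8 / 3 * n * (q * α) + n * (q * α) ^ 2 ≤ ((n : ℝ) - 1) * C := by
    have : ((n : ℝ) - 1) * C = ((4 * (n : ℝ) ^ 2 + 2 * n - 2) * (n - 1) + (n + 1)) * α ^ 2 +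
        (4 * (n - 1) + 8) * (q * α) := by
      rw [hC]; field_simp
    rw [this, mul_pow, hq2]
    have a1 : (8 / 3 * n) * (q * α) ≤ (4 * ((n : ℝ) - 1) + 8) * (q * α) :=
      mul_le_mul_of_nonneg_right (by linarith) hβ
    have a2 : ((n : ℝ) * (n + 1)) * α ^ 2 ≤ ((4 * (n : ℝ) ^ 2 + 2 * n - 2) * (n - 1) + (n + 1)) * α ^ 2 :=
      mul_le_mul_of_nonneg_right (by nlinarith) (sq_nonneg α)
    linarith
  have ha := a_bound hfr hn hβ hb hCb hz1
  have hS := hb 0 h0 z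
  rw [qB_zero, qB_zero, hz1] at hS
  set g := GM (fderiv ℂ F) 0 with hg
  have hid : ∀ v, fderiv ℂ F 0 v = v := by
    intro v
    rw [← mat_mulVec, ← Jac_eq hd h0, hJ0, Matrix.one_mulVec]
  have hD : (fun j => ∑ i, ∑ k, pd2 n i k (fun w => F w j) 0 * z i * z k) = SL g z z - (-(2 * aL g z)) • z := by
    ext j
    have e1 : ∀ i k, pd2 n i k (fun w => F w j) 0 = g (bv n i) (bv n k) j := by
      intro i k
      rw [pd2_eq hd h0, ← GM_spec (hfr.inj 0 h0), hid]
    simp only [e1]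
    have e2 : ∀ i, ∑ k, g (bv n i) (bv n k) j * z i * z k = g (bv n i) z j * z i := by
      intro i
      have := sum_bv ((ContinuousLinearMap.proj j : Vn n →L[ℂ] ℂ).comp (g (bv n i))) z
      simp only [ContinuousLinearMap.comp_apply, ContinuousLinearMap.proj_apply] at this
      rw [← this, Finset.sum_mul]
      exact Finset.sum_congr rfl fun j _ => by ring
    simp only [e2]
    have := sum_bv ((ContinuousLinearMap.proj j : Vn n →L[ℂ] ℂ).comp (g.flip z)) z
    simp only [ContinuousLinearMap.comp_apply, ContinuousLinearMap.proj_apply, ContinuousLinearMap.flip_apply] at this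
    rw [this]
    simp [SL]
    ring
  rw [hD, eucl_nsq]
  have t1 := nsq_tri (SL g z z) ((-(2 * aL g z)) • z)
  have t2 : Real.sqrt (nsq (SL g z z)) ≤ q * α := by
    rw [Real.sqrt_le_left hβ]; linarith
  have t3 : Real.sqrt (nsq ((-(2 * aL g z)) • z)) = 2 * ‖aL g z‖ := by
    rw [nsq_smul, hz1, mul_one, Real.sqrt_sq (norm_nonneg _)]; simp
  have hqn : q * α ≤ (n + 1) * α := by
    apply mul_le_mul_of_nonneg_right _ hα
    nlinarith
  have e : 1 + (q * α) ^ 2 / 4 + C = 1 + 1 / 4 * ((n : ℝ) + 1) * α ^ 2 + C := by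
    rw [mul_pow, hq2]; ring
  rw [e] at ha
  linarith
end
end Part7

/-- Corollary 3.5: the norm order of `F_α` satisfies
`‖ord‖F_α ≤ (n+1)α + √(1 + (1/4)(n+1)α² + C(n,α))`; equivalently, every `F ∈ F_α`
and every unit vector `z` satisfy the corresponding bound on `(1/2)|D²F(0)(z,z)|`. -/
theorem stmt_15 (n : ℕ) (hn : 2 ≤ n) (α : ℝ) (hα : 0 ≤ α)
    (F : (Fin n → ℂ) → (Fin n → ℂ)) (hF : memF n α F)
    (z : Fin n → ℂ) (hz : euclNorm n z = 1) :
    (1 / 2) * euclNorm n (fun j => ∑ i, ∑ k, pd2 n i k (fun w => F w j) 0 * z i * z k) ≤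
      ((n : ℝ) + 1) * α
        + Real.sqrt (1 + (1 / 4) * ((n : ℝ) + 1) * α ^ 2 +
          ((4 * (n : ℝ) ^ 2 + 2 * (n : ℝ) - 2 + ((n : ℝ) + 1) / ((n : ℝ) - 1)) * α ^ 2
            + (4 * Real.sqrt ((n : ℝ) + 1)
              + 8 * Real.sqrt ((n : ℝ) + 1) / ((n : ℝ) - 1)) * α)) := by
  exact final hn hα hF z hz

end
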